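/- Let ℓ ≥ 1 and k ≥ 2 be fixed, and let a_1,…,a_ℓ be distinct fixed integers. For X ≥ H ≥ 2 and any function g with |g(n)| ≤ 1 for all n, define M_{2k} = ∫_0^X ∫_0^1 | Σ_{x≤n≤x+H} g(n) e(αn) Π_{j=1}^ℓ Λ(n+a_j) |^{2k} dα dx. Then M_{2k} ≪ X·( H^{2k−1} + H^k (log X)^{kℓ} + H (log X)^{(2k−1)ℓ} ), with implied constant depending only on k, ℓ and the a_j. In particular, if H ≥ (log X)^{ℓk/(k−1)} then M_{2k} ≪ X·H^{2k−1}. -/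

import Mathlib

/-!
Expanding the `2k`-th power and integrating over `α` leaves the `2k`-tuples `u` of shifts in
`[0, H + 1]` with `u₁ + ⋯ + u_k = u_{k+1} + ⋯ + u_{2k}`, each weighted by the correlation
`∑_{m ≤ X} ∏ i, ∏ j, Λ(m + u i + a j)`.

An upper bound sieve shows that such a correlation over `r` distinct shifts is `≪ X` times a
product of powers of `|d| / φ(|d|)`, where `d` runs over the differences of the shifts; every
repeated shift costs a further factor `log X`. For the sieve, take the products of suitable
mean-zero functions modulo primes: they are orthogonal by the Chinese remainder theorem, while each
of them is constant on the sifted set, so that set is small.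

Coordinates of `u` within a bounded distance of each other may produce coinciding shifts, so the
tuples are sorted by their clusters of nearby coordinates. With `M = (log X)^ℓ` and `c` clusters,
the excess coordinates cost `M^(2k - c)`, and `|d| / φ(|d|)` has bounded moments. There are
`≪ H^c` tuples, and the balance condition saves one factor `H` as soon as `c > k`, for then some
cluster is a single coordinate and so has a nonzero weight in it. Both `H^c M^(2k - c)` with `c ≤ k`
and `H^(c - 1) M^(2k - c)` with `c > k` are at most `H^(2k - 1) + H^k M^k + H M^(2k - 1)`.
-/

open ArithmeticFunction Finset

/-- `e(θ) = e^{2πiθ}`. -/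
noncomputable def eTwoPi (θ : ℝ) : ℂ := Complex.exp (2 * Real.pi * Complex.I * θ)

/-! ### Sums of periodic functions -/

section Periodic

theorem sum_range_of_periodic {M : Type*} [AddCommMonoid M] {F : ℕ → M} {q : ℕ}
    (hF : Function.Periodic F q) (N : ℕ) :
    ∑ n ∈ range N, F n = (N / q) • ∑ n ∈ range q, F n + ∑ n ∈ range (N % q), F n := by
  have hshift (a n : ℕ) : F (q * a + n) = F n := by
    rw [mul_comm, add_comm]
    exact hF.nat_mul a n
  have hblocks (a : ℕ) : ∑ n ∈ range (q * a), F n = a • ∑ n ∈ range q, F n := by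
    induction a with
    | zero => simp
    | succ a ih => simp only [Nat.mul_succ, sum_range_add, ih, hshift, succ_nsmul]
  conv_lhs => rw [← Nat.div_add_mod N q]
  simp only [sum_range_add, hblocks, hshift]

theorem abs_sum_range_le_of_periodic {F : ℕ → ℝ} {q : ℕ} (hq : 0 < q) (hF : Function.Periodic F q)
    (hF0 : ∑ n ∈ range q, F n = 0) {C : ℝ} (hC : ∀ n, |F n| ≤ C) (N : ℕ) :
    |∑ n ∈ range N, F n| ≤ q * C := by
  have hC0 : 0 ≤ C := (abs_nonneg _).trans (hC 0)
  calc |∑ n ∈ range N, F n| = |∑ n ∈ range (N % q), F n| := by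
        rw [sum_range_of_periodic hF, hF0, smul_zero, zero_add]
    _ ≤ ∑ n ∈ range (N % q), |F n| := abs_sum_le_sum_abs _ _
    _ ≤ #(range (N % q)) • C := sum_le_card_nsmul _ _ _ fun n _ => hC n
    _ ≤ q * C := by
      rw [card_range, nsmul_eq_mul]
      gcongr
      exact (Nat.mod_lt _ hq).le

theorem sum_range_le_of_periodic {F : ℕ → ℝ} {q : ℕ} (hq : 0 < q) (hF : Function.Periodic F q)
    (hF0 : ∀ n, 0 ≤ F n) (N : ℕ) :
    ∑ n ∈ range N, F n ≤ ((N : ℝ) / q + 1) * ∑ n ∈ range q, F n := by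
  have hs : 0 ≤ ∑ n ∈ range q, F n := sum_nonneg fun n _ => hF0 n
  rw [sum_range_of_periodic hF, nsmul_eq_mul, add_mul, one_mul]
  gcongr
  · exact Nat.cast_div_le
  · exact fun i _ _ => hF0 i
  · exact (Nat.mod_lt _ hq).le

theorem sum_range_mul_of_coprime {R : Type*} [NonUnitalNonAssocSemiring R] {a b : ℕ} (ha : 0 < a)
    (hb : 0 < b) (hab : a.Coprime b) {F G : ℕ → R} (hF : Function.Periodic F a)
    (hG : Function.Periodic G b) :
    ∑ n ∈ range (a * b), F n * G n = (∑ n ∈ range a, F n) * ∑ n ∈ range b, G n := by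
  rw [sum_mul_sum, ← sum_product']
  refine sum_bij (fun n _ => (n % a, n % b)) ?_ ?_ ?_ ?_
  · intro n _
    simp [Nat.mod_lt, ha, hb]
  · intro m hm n hn h
    rw [Prod.mk.injEq] at h
    have hmod : m ≡ n [MOD a * b] := (Nat.modEq_and_modEq_iff_modEq_mul hab).1 h
    exact hmod.eq_of_lt_of_lt (mem_range.1 hm) (mem_range.1 hn)
  · rintro ⟨x, y⟩ hxy
    rw [mem_product, mem_range, mem_range] at hxy
    obtain ⟨k, hkx, hky⟩ := Nat.chineseRemainder hab x y
    refine ⟨k % (a * b), mem_range.2 (Nat.mod_lt _ (by positivity)), ?_⟩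
    simp only [Nat.mod_mul_right_mod, Nat.mod_mul_left_mod, Prod.mk.injEq]
    exact ⟨Eq.trans hkx (Nat.mod_eq_of_lt hxy.1), Eq.trans hky (Nat.mod_eq_of_lt hxy.2)⟩
  · intro n _
    rw [hF.map_mod_nat, hG.map_mod_nat]

variable {ι R : Type*} [CommSemiring R] {T : Finset ι} {q : ι → ℕ} {F : ι → ℕ → R}

theorem periodic_prod (hF : ∀ i ∈ T, Function.Periodic (F i) (q i)) :
    Function.Periodic (fun n => ∏ i ∈ T, F i n) (∏ i ∈ T, q i) := by
  intro n
  refine prod_congr rfl fun i hi => ?_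
  obtain ⟨c, hc⟩ := dvd_prod_of_mem q hi
  rw [hc, mul_comm (q i) c]
  exact (hF i hi).nat_mul c n

theorem sum_range_prod_of_pairwise_coprime (hq : ∀ i ∈ T, 0 < q i)
    (hT : (T : Set ι).Pairwise fun i j => (q i).Coprime (q j))
    (hF : ∀ i ∈ T, Function.Periodic (F i) (q i)) :
    ∑ n ∈ range (∏ i ∈ T, q i), ∏ i ∈ T, F i n = ∏ i ∈ T, ∑ n ∈ range (q i), F i n := by
  classical
  induction T using Finset.induction_on with
  | empty => simp
  | insert i T hi ih =>
    rw [forall_mem_insert] at hq hF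
    have hiT : (q i).Coprime (∏ j ∈ T, q j) := Nat.Coprime.prod_right fun j hj =>
      hT (mem_insert_self i T) (mem_insert_of_mem hj) (ne_of_mem_of_not_mem hj hi).symm
    simp only [prod_insert hi]
    rw [← ih hq.2 (hT.mono <| coe_subset.2 <| subset_insert i T) hF.2]
    exact sum_range_mul_of_coprime hq.1 (prod_pos hq.2) hiT hF.1 (periodic_prod hF.2)

end Periodic

/-! ### The Selberg sieve by orthogonality -/

/-- The sets of elements of `P` with product at most `D`. For a set `P` of primes they encode the
squarefree integers up to `D` composed of primes in `P`. -/
def smallProdSubsets (P : Finset ℕ) (D : ℕ) : Finset (Finset ℕ) :=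
  {T ∈ P.powerset | ∏ p ∈ T, p ≤ D}

section SmallProdSubsets

variable {P T : Finset ℕ} {D : ℕ}

theorem mem_smallProdSubsets : T ∈ smallProdSubsets P D ↔ T ⊆ P ∧ ∏ p ∈ T, p ≤ D := by
  rw [smallProdSubsets, mem_filter, mem_powerset]

theorem card_smallProdSubsets_le (hP : ∀ p ∈ P, p.Prime) : #(smallProdSubsets P D) ≤ D := by
  suffices h : #(smallProdSubsets P D) ≤ #(Icc 1 D) by rwa [Nat.card_Icc, Nat.add_sub_cancel] at h
  refine card_le_card_of_injOn (fun T => ∏ p ∈ T, p) (fun T hT => ?_) fun T hT T' hT' h => ?_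
  · obtain ⟨hTP, hTD⟩ := mem_smallProdSubsets.1 hT
    exact mem_Icc.2 ⟨prod_pos fun p hp => (hP p (hTP hp)).pos, hTD⟩
  · rw [← Nat.primeFactors_prod fun p hp => hP p ((mem_smallProdSubsets.1 hT).1 hp),
      ← Nat.primeFactors_prod fun p hp => hP p ((mem_smallProdSubsets.1 hT').1 hp)]
    exact congrArg Nat.primeFactors h

theorem one_le_sum_smallProdSubsets (hD : 1 ≤ D) {g : ℕ → ℝ} (hg : ∀ p ∈ P, 0 ≤ g p) :
    1 ≤ ∑ T ∈ smallProdSubsets P D, ∏ p ∈ T, g p := by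
  have hempty : ∅ ∈ smallProdSubsets P D := by simpa [mem_smallProdSubsets] using hD
  simpa only [prod_empty] using single_le_sum (f := fun T => ∏ p ∈ T, g p)
    (fun T hT => prod_nonneg fun p hp => hg p ((mem_smallProdSubsets.1 hT).1 hp)) hempty

end SmallProdSubsets

/-- For each prime `p ∈ P` a function `f p` on the residue classes modulo `p` with mean `0` and
mean square `g p`. By the Chinese remainder theorem the products `∏ p ∈ T, f p` are orthogonal for
distinct `T ⊆ P`. -/
structure IsMeanZeroFamily (P : Finset ℕ) (f : ℕ → ℕ → ℝ) (g : ℕ → ℝ) : Prop where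
  prime : ∀ p ∈ P, p.Prime
  periodic : ∀ p ∈ P, Function.Periodic (f p) p
  abs_le : ∀ p ∈ P, ∀ n, |f p n| ≤ p
  sum_eq_zero : ∀ p ∈ P, ∑ n ∈ range p, f p n = 0
  sum_sq_eq : ∀ p ∈ P, ∑ n ∈ range p, f p n ^ 2 = p * g p

namespace IsMeanZeroFamily

variable {P T T' : Finset ℕ} {f : ℕ → ℕ → ℝ} {g : ℕ → ℝ} {D : ℕ}

theorem nonneg (h : IsMeanZeroFamily P f g) {p : ℕ} (hp : p ∈ P) : 0 ≤ g p := by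
  have hp0 : (0 : ℝ) < p := by exact_mod_cast (h.prime p hp).pos
  refine nonneg_of_mul_nonneg_right ?_ hp0
  rw [← h.sum_sq_eq p hp]
  exact sum_nonneg fun n _ => sq_nonneg _

theorem pairwise_coprime (h : IsMeanZeroFamily P f g) (hT : T ⊆ P) :
    (T : Set ℕ).Pairwise fun p q => p.Coprime q := fun _ hp _ hq hpq =>
  (Nat.coprime_primes (h.prime _ (hT hp)) (h.prime _ (hT hq))).2 hpq

theorem abs_prod_le (h : IsMeanZeroFamily P f g) (hT : T ∈ smallProdSubsets P D) (n : ℕ) :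
    |∏ p ∈ T, f p n| ≤ D := by
  obtain ⟨hTP, hTD⟩ := mem_smallProdSubsets.1 hT
  rw [abs_prod]
  calc ∏ p ∈ T, |f p n| ≤ ∏ p ∈ T, (p : ℝ) :=
        prod_le_prod (fun p _ => abs_nonneg _) fun p hp => h.abs_le p (hTP hp) n
    _ = (∏ p ∈ T, p : ℕ) := (Nat.cast_prod _ _).symm
    _ ≤ D := by exact_mod_cast hTD

theorem sum_range_prod_mul_prod_le (h : IsMeanZeroFamily P f g) (hT : T ∈ smallProdSubsets P D)
    (hT' : T' ∈ smallProdSubsets P D) (hne : T ≠ T') (N : ℕ) :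
    ∑ n ∈ range N, (∏ p ∈ T, f p n) * ∏ p ∈ T', f p n ≤ (D : ℝ) ^ 4 := by
  obtain ⟨hTP, hTD⟩ := mem_smallProdSubsets.1 hT
  obtain ⟨hTP', hTD'⟩ := mem_smallProdSubsets.1 hT'
  have hU : T ∪ T' ⊆ P := union_subset hTP hTP'
  have hpos (p : ℕ) (hp : p ∈ T ∪ T') : 0 < p := (h.prime p (hU hp)).pos
  set F : ℕ → ℕ → ℝ := fun p n =>
    (if p ∈ T then f p n else 1) * (if p ∈ T' then f p n else 1) with hF
  have hFper : ∀ p ∈ T ∪ T', Function.Periodic (F p) p := fun p hp n => by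
    simp only [hF, h.periodic p (hU hp) n]
  have hFprod (n : ℕ) : ∏ p ∈ T ∪ T', F p n = (∏ p ∈ T, f p n) * ∏ p ∈ T', f p n := by
    simp only [hF, prod_mul_distrib, prod_ite_mem, union_inter_cancel_left,
      union_inter_cancel_right]
  have hzero : ∑ n ∈ range (∏ p ∈ T ∪ T', p), ∏ p ∈ T ∪ T', F p n = 0 := by
    obtain ⟨p, hp⟩ : (symmDiff T T').Nonempty := by rwa [symmDiff_nonempty]
    rw [mem_symmDiff] at hp
    have hpU : p ∈ T ∪ T' := mem_union.2 (hp.imp And.left And.left)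
    rw [sum_range_prod_of_pairwise_coprime hpos (h.pairwise_coprime hU) hFper]
    refine prod_eq_zero hpU ?_
    rw [← h.sum_eq_zero p (hU hpU)]
    obtain ⟨h1, h2⟩ | ⟨h1, h2⟩ := hp <;> simp [hF, h1, h2]
  have hmod : ((∏ p ∈ T ∪ T', p : ℕ) : ℝ) ≤ D * D := by
    have hprod : ∏ p ∈ T ∪ T', p ≤ (∏ p ∈ T, p) * ∏ p ∈ T', p := by
      rw [← prod_union_inter]
      exact Nat.le_mul_of_pos_right _
        (prod_pos fun p hp => hpos p (inter_subset_union hp))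
    exact_mod_cast hprod.trans (Nat.mul_le_mul hTD hTD')
  have hbound (n : ℕ) : |∏ p ∈ T ∪ T', F p n| ≤ (D : ℝ) * D := by
    rw [hFprod, abs_mul]
    exact mul_le_mul (h.abs_prod_le hT n) (h.abs_prod_le hT' n) (abs_nonneg _) (Nat.cast_nonneg _)
  calc ∑ n ∈ range N, (∏ p ∈ T, f p n) * ∏ p ∈ T', f p n
      = ∑ n ∈ range N, ∏ p ∈ T ∪ T', F p n := by simp only [hFprod]
    _ ≤ (∏ p ∈ T ∪ T', p : ℕ) * ((D : ℝ) * D) := (le_abs_self _).trans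
        (abs_sum_range_le_of_periodic (prod_pos hpos) (periodic_prod hFper) hzero hbound N)
    _ ≤ ((D : ℝ) * D) * (D * D) := by gcongr
    _ = (D : ℝ) ^ 4 := by ring

theorem sum_range_prod_sq_le (h : IsMeanZeroFamily P f g) (hT : T ∈ smallProdSubsets P D)
    (N : ℕ) : ∑ n ∈ range N, (∏ p ∈ T, f p n) ^ 2 ≤ (N + D) * ∏ p ∈ T, g p := by
  obtain ⟨hTP, hTD⟩ := mem_smallProdSubsets.1 hT
  have hpos (p : ℕ) (hp : p ∈ T) : 0 < p := (h.prime p (hTP hp)).pos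
  have hper : ∀ p ∈ T, Function.Periodic (fun n => f p n ^ 2) p := fun p hp n => by
    simp only [h.periodic p (hTP hp) n]
  have hq : (0 : ℝ) < (∏ p ∈ T, p : ℕ) := by exact_mod_cast prod_pos hpos
  have hg : 0 ≤ ∏ p ∈ T, g p := prod_nonneg fun p hp => h.nonneg (hTP hp)
  have hperiod : ∑ n ∈ range (∏ p ∈ T, p), ∏ p ∈ T, f p n ^ 2
      = (∏ p ∈ T, p : ℕ) * ∏ p ∈ T, g p := by
    rw [sum_range_prod_of_pairwise_coprime hpos (h.pairwise_coprime hTP) hper,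
      prod_congr rfl fun p hp => h.sum_sq_eq p (hTP hp), prod_mul_distrib, Nat.cast_prod]
  simp only [← prod_pow]
  calc ∑ n ∈ range N, ∏ p ∈ T, f p n ^ 2
      ≤ (N / (∏ p ∈ T, p : ℕ) + 1) * ((∏ p ∈ T, p : ℕ) * ∏ p ∈ T, g p) := by
        rw [← hperiod]
        exact sum_range_le_of_periodic (prod_pos hpos) (periodic_prod hper)
          (fun n => prod_nonneg fun p _ => sq_nonneg _) N
    _ = (N + (∏ p ∈ T, p : ℕ)) * ∏ p ∈ T, g p := by field_simp
    _ ≤ (N + D) * ∏ p ∈ T, g p := by gcongr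

theorem sum_range_sq_sum_prod_le (h : IsMeanZeroFamily P f g) (N D : ℕ) :
    ∑ n ∈ range N, (∑ T ∈ smallProdSubsets P D, ∏ p ∈ T, f p n) ^ 2
      ≤ (N + D) * ∑ T ∈ smallProdSubsets P D, ∏ p ∈ T, g p + (D : ℝ) ^ 6 := by
  set 𝒯 := smallProdSubsets P D
  have hcard : (#𝒯 : ℝ) ≤ D := by exact_mod_cast card_smallProdSubsets_le h.prime
  calc ∑ n ∈ range N, (∑ T ∈ 𝒯, ∏ p ∈ T, f p n) ^ 2
      = ∑ T ∈ 𝒯, ∑ T' ∈ 𝒯, ∑ n ∈ range N, (∏ p ∈ T, f p n) * ∏ p ∈ T', f p n := by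
        simp only [sq, sum_mul_sum]
        rw [sum_comm]
        exact sum_congr rfl fun T _ => sum_comm
    _ ≤ ∑ T ∈ 𝒯, ∑ T' ∈ 𝒯, ((if T = T' then (N + D) * ∏ p ∈ T, g p else 0) + (D : ℝ) ^ 4) := by
        refine sum_le_sum fun T hT => sum_le_sum fun T' hT' => ?_
        split_ifs with hTT'
        · subst hTT'
          simp only [← sq]
          exact (h.sum_range_prod_sq_le hT N).trans (le_add_of_nonneg_right (by positivity))
        · rw [zero_add]
          exact h.sum_range_prod_mul_prod_le hT hT' hTT' N
    _ = (N + D) * ∑ T ∈ 𝒯, ∏ p ∈ T, g p + #𝒯 * (#𝒯 * (D : ℝ) ^ 4) := by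
        simp only [sum_add_distrib, sum_const, nsmul_eq_mul, sum_ite_eq, sum_ite_mem, inter_self,
          mul_sum]
    _ ≤ (N + D) * ∑ T ∈ 𝒯, ∏ p ∈ T, g p + D * (D * (D : ℝ) ^ 4) := by gcongr
    _ = (N + D) * ∑ T ∈ 𝒯, ∏ p ∈ T, g p + (D : ℝ) ^ 6 := by ring

/-- On the sifted set `Z` every `f p` is constant, so each `n ∈ Z` contributes the full square of
the sieve density to the sum of squares. -/
theorem card_mul_sum_le (h : IsMeanZeroFamily P f g) (hD : 1 ≤ D) {N : ℕ} {Z : Finset ℕ}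
    (hZN : Z ⊆ range N) (hZ : ∀ n ∈ Z, ∀ p ∈ P, f p n = g p) :
    (#Z : ℝ) * ∑ T ∈ smallProdSubsets P D, ∏ p ∈ T, g p ≤ N + 2 * (D : ℝ) ^ 6 := by
  set S := ∑ T ∈ smallProdSubsets P D, ∏ p ∈ T, g p
  have hS1 : 1 ≤ S := one_le_sum_smallProdSubsets hD fun p hp => h.nonneg hp
  have hD1 : (1 : ℝ) ≤ D := by exact_mod_cast hD
  have hD6 : (D : ℝ) ≤ (D : ℝ) ^ 6 := le_self_pow₀ hD1 (by norm_num)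
  have hval : ∀ n ∈ Z, ∑ T ∈ smallProdSubsets P D, ∏ p ∈ T, f p n = S := fun n hn =>
    sum_congr rfl fun T hT => prod_congr rfl fun p hp =>
      hZ n hn p ((mem_smallProdSubsets.1 hT).1 hp)
  refine le_of_mul_le_mul_right ?_ (zero_lt_one.trans_le hS1)
  calc (#Z : ℝ) * S * S
      = ∑ n ∈ Z, (∑ T ∈ smallProdSubsets P D, ∏ p ∈ T, f p n) ^ 2 := by
        rw [sum_congr rfl fun n hn => by rw [hval n hn], sum_const, nsmul_eq_mul, sq, mul_assoc]
    _ ≤ ∑ n ∈ range N, (∑ T ∈ smallProdSubsets P D, ∏ p ∈ T, f p n) ^ 2 :=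
        sum_le_sum_of_subset_of_nonneg hZN fun n _ _ => sq_nonneg _
    _ ≤ (N + D) * S + (D : ℝ) ^ 6 := h.sum_range_sq_sum_prod_le N D
    _ ≤ (N + (D : ℝ) ^ 6) * S + (D : ℝ) ^ 6 * S := by
        gcongr
        exact le_mul_of_one_le_right (by positivity) hS1
    _ = (N + 2 * (D : ℝ) ^ 6) * S := by ring

end IsMeanZeroFamily

section ResidueClasses

variable {P : Finset ℕ} {r : ℕ} {bad : ℕ → ℕ → Prop} [∀ p n, Decidable (bad p n)]

theorem isMeanZeroFamily_of_card_eq (hP : ∀ p ∈ P, p.Prime) (hrP : ∀ p ∈ P, r < p)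
    (hper : ∀ p ∈ P, ∀ n, bad p (n + p) ↔ bad p n)
    (hcard : ∀ p ∈ P, #{n ∈ range p | bad p n} = r) :
    IsMeanZeroFamily P (fun p n => if bad p n then -1 else (r : ℝ) / (p - r))
      fun p => (r : ℝ) / (p - r) := by
  have hrp : ∀ p ∈ P, (1 : ℝ) ≤ p - r := fun p hp => by
    rw [le_sub_iff_add_le']
    exact_mod_cast hrP p hp
  have hgood : ∀ p ∈ P, (#{n ∈ range p | ¬ bad p n} : ℝ) = p - r := fun p hp => by
    have hsplit := card_filter_add_card_filter_not (s := range p) (bad p)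
    rw [hcard p hp, card_range] at hsplit
    rw [eq_sub_iff_add_eq']
    exact_mod_cast hsplit
  refine ⟨hP, fun p hp n => by simp only [hper p hp n], fun p hp n => ?_, fun p hp => ?_,
    fun p hp => ?_⟩
  · have hrp := hrp p hp
    split_ifs
    · rw [abs_neg, abs_one]
      exact_mod_cast (hP p hp).one_le
    · rw [abs_of_nonneg (by positivity)]
      exact (div_le_self (Nat.cast_nonneg r) hrp).trans (by exact_mod_cast (hrP p hp).le)
  · have hrp := hrp p hp
    simp only [sum_ite, sum_const, hcard p hp, nsmul_eq_mul, hgood p hp]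
    field_simp
    ring
  · have hrp := hrp p hp
    simp only [ite_pow, sum_ite, sum_const, hcard p hp, nsmul_eq_mul, hgood p hp]
    field_simp
    ring

theorem card_mul_sum_le_of_sifted (hP : ∀ p ∈ P, p.Prime) (hrP : ∀ p ∈ P, r < p)
    (hper : ∀ p ∈ P, ∀ n, bad p (n + p) ↔ bad p n)
    (hcard : ∀ p ∈ P, #{n ∈ range p | bad p n} = r) {D N : ℕ} (hD : 1 ≤ D) {Z : Finset ℕ}
    (hZN : Z ⊆ range N) (hZ : ∀ n ∈ Z, ∀ p ∈ P, ¬ bad p n) :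
    (#Z : ℝ) * ∑ T ∈ smallProdSubsets P D, ∏ p ∈ T, (r : ℝ) / (p - r) ≤ N + 2 * (D : ℝ) ^ 6 :=
  (isMeanZeroFamily_of_card_eq hP hrP hper hcard).card_mul_sum_le hD hZN
    fun n hn p hp => if_neg (hZ n hn p hp)

end ResidueClasses

/-! ### Lower bounds for the sieve density -/

section Density

theorem hasSum_indicator_factoredNumbers_inv {T : Finset ℕ} (hT : ∀ p ∈ T, p.Prime) :
    HasSum ((Nat.factoredNumbers T).indicator fun m => (m : ℝ)⁻¹)
      (∏ p ∈ T, (1 - (p : ℝ)⁻¹)⁻¹) := by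
  let inv : ℕ →* ℝ := ((invMonoidWithZeroHom (G₀ := ℝ)).comp
    (Nat.castRingHom ℝ).toMonoidWithZeroHom).toMonoidHom
  have hlt {p : ℕ} (hp : p.Prime) : ‖inv p‖ < 1 := by
    change ‖(p : ℝ)⁻¹‖ < 1
    rw [norm_inv, Real.norm_natCast]
    exact inv_lt_one_of_one_lt₀ (by exact_mod_cast hp.one_lt)
  have hsum :=
    (EulerProduct.summable_and_hasSum_factoredNumbers_prod_filter_prime_geometric hlt T).2
  rw [filter_true_of_mem hT] at hsum
  exact hasSum_subtype_iff_indicator.1 hsum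

theorem sum_inv_le_of_primeFactors_eq {T E : Finset ℕ} (hT : ∀ p ∈ T, p.Prime)
    (hE0 : ∀ d ∈ E, d ≠ 0) (hE : ∀ d ∈ E, d.primeFactors = T) :
    ∑ d ∈ E, (d : ℝ)⁻¹ ≤ ∏ p ∈ T, (1 / ((p : ℝ) - 1)) := by
  set Q := ∏ p ∈ T, p with hQ
  have hmul : ∀ d ∈ E, Q * (d / Q) = d := fun d hd =>
    Nat.mul_div_cancel' (by rw [hQ, ← hE d hd]; exact Nat.prod_primeFactors_dvd d)
  have hinj : Set.InjOn (fun d => d / Q) E := fun d hd d' hd' h => by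
    rw [← hmul d hd, ← hmul d' hd', show d / Q = d' / Q from h]
  have hfactored : ∀ m ∈ E.image fun d => d / Q, m ∈ Nat.factoredNumbers T := fun m hm => by
    obtain ⟨d, hd, rfl⟩ := mem_image.1 hm
    refine Nat.mem_factoredNumbers'.2 fun p hp hpd => ?_
    rw [← hE d hd]
    exact Nat.mem_primeFactors.2 ⟨hp, hmul d hd ▸ hpd.mul_left Q, hE0 d hd⟩
  have hsum := hasSum_indicator_factoredNumbers_inv hT
  calc ∑ d ∈ E, (d : ℝ)⁻¹ = ∑ d ∈ E, (Q : ℝ)⁻¹ * ((d / Q : ℕ) : ℝ)⁻¹ := by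
        refine sum_congr rfl fun d hd => ?_
        rw [← mul_inv, ← Nat.cast_mul, hmul d hd]
    _ = (Q : ℝ)⁻¹ * ∑ m ∈ E.image fun d => d / Q,
          (Nat.factoredNumbers T).indicator (fun m => (m : ℝ)⁻¹) m := by
        rw [mul_sum, sum_image hinj]
        refine sum_congr rfl fun d hd => ?_
        rw [Set.indicator_of_mem (hfactored _ (mem_image_of_mem _ hd))]
    _ ≤ (Q : ℝ)⁻¹ * ∏ p ∈ T, (1 - (p : ℝ)⁻¹)⁻¹ := by
        gcongr
        exact sum_le_hasSum _ (fun m _ => Set.indicator_nonneg (fun n _ => by positivity) m) hsum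
    _ = ∏ p ∈ T, (1 / ((p : ℝ) - 1)) := by
        rw [hQ, Nat.cast_prod, ← prod_inv_distrib, ← prod_mul_distrib]
        refine prod_congr rfl fun p hp => ?_
        have hp0 : (p : ℝ) ≠ 0 := by exact_mod_cast (hT p hp).ne_zero
        rw [← mul_inv, mul_sub, mul_one, mul_inv_cancel₀ hp0, one_div]

theorem log_add_one_le_sum_prod_primesLE (z : ℕ) :
    Real.log (z + 1) ≤
      ∑ T ∈ smallProdSubsets z.primesLE z, ∏ p ∈ T, (1 / ((p : ℝ) - 1)) := by
  have hharmonic : Real.log (z + 1) ≤ ∑ d ∈ Icc 1 z, (d : ℝ)⁻¹ := by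
    have h := log_add_one_le_harmonic z
    rw [harmonic_eq_sum_Icc] at h
    push_cast at h
    exact h
  have hmaps : ∀ d ∈ Icc 1 z, d.primeFactors ∈ smallProdSubsets z.primesLE z := fun d hd => by
    rw [mem_Icc] at hd
    refine mem_smallProdSubsets.2 ⟨fun p hp => Nat.mem_primesLE.2
      ⟨(Nat.le_of_mem_primeFactors hp).trans hd.2, Nat.prime_of_mem_primeFactors hp⟩, ?_⟩
    exact (Nat.le_of_dvd hd.1 (Nat.prod_primeFactors_dvd d)).trans hd.2
  refine hharmonic.trans ?_
  rw [← sum_fiberwise_of_maps_to hmaps]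
  refine sum_le_sum fun T hT => sum_inv_le_of_primeFactors_eq
    (fun p hp => (Nat.mem_primesLE.1 ((mem_smallProdSubsets.1 hT).1 hp)).2) (fun d hd => ?_)
    fun d hd => (mem_filter.1 hd).2
  exact Nat.one_le_iff_ne_zero.1 (mem_Icc.1 (mem_filter.1 hd).1).1

theorem sum_prod_mul_prod_union_eq {ι R : Type*} [DecidableEq ι] [CommSemiring R] (T : Finset ι)
    (u v : ι → R) :
    ∑ x ∈ T.powerset ×ˢ T.powerset with x.1 ∪ x.2 = T, (∏ p ∈ x.1, u p) * ∏ p ∈ x.2, v p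
      = ∏ p ∈ T, (u p * (1 + v p) + v p) := by
  rw [prod_add, sum_filter, sum_product]
  refine sum_congr rfl fun A hA => ?_
  rw [mem_powerset] at hA
  rw [prod_mul_distrib, prod_one_add, mul_assoc, sum_mul, mul_sum, ← sum_filter]
  refine sum_bij' (fun B _ => B ∩ A) (fun C _ => C ∪ (T \ A)) (fun _ _ => ?_) (fun C hC => ?_)
    (fun B hB => ?_) (fun C hC => ?_) fun B hB => ?_
  · exact mem_powerset.2 inter_subset_right
  · rw [mem_powerset] at hC
    refine mem_filter.2 ⟨mem_powerset.2 (union_subset (hC.trans hA) sdiff_subset), ?_⟩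
    rw [← union_assoc, union_eq_left.2 hC, union_sdiff_of_subset hA]
  · obtain ⟨hBT, hAB⟩ := mem_filter.1 hB
    grind
  · rw [mem_powerset] at hC
    grind
  · have hAB := (mem_filter.1 hB).2
    have hsdiff : T \ A = B \ A := by rw [← hAB, union_sdiff_left]
    rw [hsdiff, prod_inter_mul_prod_sdiff]

section NonnegWeights

variable {P Q : Finset ℕ} {u v : ℕ → ℝ}

theorem sum_smallProdSubsets_nonneg (hu : ∀ p ∈ P, 0 ≤ u p) (D : ℕ) :
    0 ≤ ∑ T ∈ smallProdSubsets P D, ∏ p ∈ T, u p :=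
  sum_nonneg fun _ hT => prod_nonneg fun p hp => hu p ((mem_smallProdSubsets.1 hT).1 hp)

theorem sum_smallProdSubsets_mul_le (hP : ∀ p ∈ P, 0 < p) (hu : ∀ p ∈ P, 0 ≤ u p)
    (hv : ∀ p ∈ P, 0 ≤ v p) (y z : ℕ) :
    (∑ T ∈ smallProdSubsets P y, ∏ p ∈ T, u p) * ∑ T ∈ smallProdSubsets P z, ∏ p ∈ T, v p
      ≤ ∑ T ∈ smallProdSubsets P (y * z), ∏ p ∈ T, (u p * (1 + v p) + v p) := by
  have hmaps : ∀ x ∈ smallProdSubsets P y ×ˢ smallProdSubsets P z,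
      x.1 ∪ x.2 ∈ smallProdSubsets P (y * z) := fun ⟨A, B⟩ hx => by
    rw [mem_product, mem_smallProdSubsets, mem_smallProdSubsets] at hx
    obtain ⟨⟨hAP, hAy⟩, hBP, hBz⟩ := hx
    refine mem_smallProdSubsets.2 ⟨union_subset hAP hBP, le_trans ?_ (Nat.mul_le_mul hAy hBz)⟩
    rw [← prod_union_inter]
    exact Nat.le_mul_of_pos_right _ (prod_pos fun p hp => hP p (hAP (inter_subset_left hp)))
  rw [sum_mul_sum, ← sum_product', ← sum_fiberwise_of_maps_to hmaps]
  refine sum_le_sum fun T hT => ?_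
  have hTP := (mem_smallProdSubsets.1 hT).1
  rw [← sum_prod_mul_prod_union_eq]
  refine sum_le_sum_of_subset_of_nonneg (fun x hx => ?_) fun x hx _ => ?_
  · have hxT := (mem_filter.1 hx).2
    refine mem_filter.2 ⟨mem_product.2 ⟨mem_powerset.2 ?_, mem_powerset.2 ?_⟩, hxT⟩
    · exact hxT ▸ subset_union_left
    · exact hxT ▸ subset_union_right
  · obtain ⟨h1, h2⟩ := mem_product.1 (mem_filter.1 hx).1
    exact mul_nonneg (prod_nonneg fun p hp => hu p (hTP (mem_powerset.1 h1 hp)))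
      (prod_nonneg fun p hp => hv p (hTP (mem_powerset.1 h2 hp)))

theorem sum_smallProdSubsets_pow_le (hP : ∀ p ∈ P, 0 < p) (hu : ∀ p ∈ P, 0 ≤ u p) (z r : ℕ) :
    (∑ T ∈ smallProdSubsets P z, ∏ p ∈ T, u p) ^ r
      ≤ ∑ T ∈ smallProdSubsets P (z ^ r), ∏ p ∈ T, ((1 + u p) ^ r - 1) := by
  have hnonneg (r : ℕ) : ∀ p ∈ P, 0 ≤ (1 + u p) ^ r - 1 := fun p hp =>
    sub_nonneg.2 (one_le_pow₀ (le_add_of_nonneg_right (hu p hp)))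
  induction r with
  | zero =>
    rw [pow_zero]
    exact one_le_sum_smallProdSubsets (by simp) (hnonneg 0)
  | succ r ih =>
    rw [pow_succ, pow_succ]
    calc _ ≤ _ := mul_le_mul_of_nonneg_right ih (sum_smallProdSubsets_nonneg hu z)
      _ ≤ _ := sum_smallProdSubsets_mul_le hP (hnonneg r) hu _ _
      _ = _ := sum_congr rfl fun T _ => prod_congr rfl fun p _ => by ring

theorem sum_smallProdSubsets_le_prod_mul (hPQ : P ⊆ Q) (hQ : ∀ p ∈ Q, 0 < p)
    (hu : ∀ p ∈ Q, 0 ≤ u p) (z : ℕ) :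
    ∑ T ∈ smallProdSubsets Q z, ∏ p ∈ T, u p ≤
      (∏ p ∈ Q \ P, (1 + u p)) * ∑ T ∈ smallProdSubsets P z, ∏ p ∈ T, u p := by
  rw [prod_one_add, sum_mul_sum, ← sum_product']
  have hinj : Set.InjOn (fun T => (T \ P, T ∩ P)) (smallProdSubsets Q z : Set (Finset ℕ)) :=
    fun T _ T' _ h => by
      obtain ⟨h1, h2⟩ := Prod.ext_iff.1 h
      rw [← sdiff_union_inter T P, ← sdiff_union_inter T' P]
      exact congrArg₂ _ h1 h2
  calc ∑ T ∈ smallProdSubsets Q z, ∏ p ∈ T, u p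
      = ∑ T ∈ smallProdSubsets Q z, (∏ p ∈ T \ P, u p) * ∏ p ∈ T ∩ P, u p :=
        sum_congr rfl fun T _ => by rw [mul_comm, prod_inter_mul_prod_sdiff]
    _ = ∑ x ∈ (smallProdSubsets Q z).image fun T => (T \ P, T ∩ P),
          (∏ p ∈ x.1, u p) * ∏ p ∈ x.2, u p := by rw [sum_image hinj]
    _ ≤ _ := ?_
  refine sum_le_sum_of_subset_of_nonneg (fun x hx => ?_) fun x hx _ => ?_
  · obtain ⟨T, hT, rfl⟩ := mem_image.1 hx
    obtain ⟨hTQ, hTz⟩ := mem_smallProdSubsets.1 hT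
    refine mem_product.2 ⟨mem_powerset.2 (sdiff_subset_sdiff hTQ le_rfl),
      mem_smallProdSubsets.2 ⟨inter_subset_right, le_trans ?_ hTz⟩⟩
    rw [← prod_inter_mul_prod_sdiff T P]
    exact Nat.le_mul_of_pos_right _ (prod_pos fun p hp => hQ p (hTQ (sdiff_subset hp)))
  · obtain ⟨h1, h2⟩ := mem_product.1 hx
    exact mul_nonneg
      (prod_nonneg fun p hp => hu p (sdiff_subset (mem_powerset.1 h1 hp)))
      (prod_nonneg fun p hp => hu p (hPQ ((mem_smallProdSubsets.1 h2).1 hp)))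

end NonnegWeights

theorem one_add_one_div_sub_one_pow_sub_one_le {x : ℝ} {r : ℕ} (hx : 1 < x) (hr : r < x) :
    (1 + 1 / (x - 1)) ^ r - 1 ≤ r / (x - r) := by
  have hx0 : 0 < x := zero_lt_one.trans hx
  have hx1 : 0 < x - 1 := sub_pos.2 hx
  have hxr : 0 < x - r := sub_pos.2 hr
  have hbernoulli : (x - r) / x ≤ ((x - 1) / x) ^ r := by
    have hxinv : x⁻¹ ≤ 1 := inv_le_one_of_one_le₀ hx.le
    have h := one_add_mul_le_pow (a := -x⁻¹) (by linarith) r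
    rwa [mul_neg, ← sub_eq_add_neg, ← sub_eq_add_neg, ← div_eq_mul_inv, one_sub_div hx0.ne',
      ← one_div, one_sub_div hx0.ne'] at h
  calc (1 + 1 / (x - 1)) ^ r - 1 = (((x - 1) / x) ^ r)⁻¹ - 1 := by
        rw [← inv_pow, inv_div]
        congr 2
        field_simp
        ring
    _ ≤ ((x - r) / x)⁻¹ - 1 := by gcongr
    _ = r / (x - r) := by
        field_simp
        ring

theorem log_add_one_pow_le_sieveDensity {P : Finset ℕ} {z r : ℕ} (hP : P ⊆ z.primesLE)
    (hr : ∀ p ∈ P, r < p) :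
    Real.log (z + 1) ^ r ≤ (∏ p ∈ z.primesLE \ P, (1 + 1 / ((p : ℝ) - 1))) ^ r *
      ∑ T ∈ smallProdSubsets P (z ^ r), ∏ p ∈ T, (r : ℝ) / (p - r) := by
  have hprime (p : ℕ) (hp : p ∈ z.primesLE) : p.Prime := (Nat.mem_primesLE.1 hp).2
  have hp1 (p : ℕ) (hp : p ∈ z.primesLE) : (1 : ℝ) < p := by exact_mod_cast (hprime p hp).one_lt
  have hu (p : ℕ) (hp : p ∈ z.primesLE) : 0 ≤ 1 / ((p : ℝ) - 1) :=
    div_nonneg zero_le_one (sub_nonneg.2 (hp1 p hp).le)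
  have hexcl : 0 ≤ ∏ p ∈ z.primesLE \ P, (1 + 1 / ((p : ℝ) - 1)) :=
    prod_nonneg fun p hp => add_nonneg zero_le_one (hu p (sdiff_subset hp))
  calc Real.log (z + 1) ^ r
      ≤ ((∏ p ∈ z.primesLE \ P, (1 + 1 / ((p : ℝ) - 1))) *
          ∑ T ∈ smallProdSubsets P z, ∏ p ∈ T, 1 / ((p : ℝ) - 1)) ^ r := by
        refine pow_le_pow_left₀ (Real.log_nonneg (by simp)) ?_ r
        exact (log_add_one_le_sum_prod_primesLE z).trans
          (sum_smallProdSubsets_le_prod_mul hP (fun p hp => (hprime p hp).pos) hu z)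
    _ ≤ _ := by
        rw [mul_pow]
        gcongr
        refine (sum_smallProdSubsets_pow_le (fun p hp => (hprime p (hP hp)).pos)
          (fun p hp => hu p (hP hp)) z r).trans ?_
        refine sum_le_sum fun T hT => prod_le_prod (fun p hp => ?_) fun p hp => ?_
          <;> have hpP := (mem_smallProdSubsets.1 hT).1 hp
        · exact sub_nonneg.2 (one_le_pow₀ (le_add_of_nonneg_right (hu p (hP hpP))))
        · exact one_add_one_div_sub_one_pow_sub_one_le (hp1 p (hP hpP))
            (by exact_mod_cast hr p hpP)

end Density

/-! ### Moments of `n / φ(n)` -/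

section TotientRatio

/-- The ratio `n / φ(n)` for `n ≠ 0`, as a product over the primes dividing `n`; its value at `0`
is `1`. -/
noncomputable def totientRatio (n : ℕ) : ℝ := ∏ p ∈ n.primeFactors, (1 + 1 / ((p : ℝ) - 1))

theorem one_le_one_add_one_div_sub_one {x : ℝ} (hx : 1 ≤ x) : 1 ≤ 1 + 1 / (x - 1) :=
  le_add_of_nonneg_right (div_nonneg zero_le_one (sub_nonneg.2 hx))

theorem one_le_totientRatio (n : ℕ) : 1 ≤ totientRatio n :=
  Finset.one_le_prod fun _ hp => one_le_one_add_one_div_sub_one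
    (by exact_mod_cast (Nat.prime_of_mem_primeFactors hp).one_le)

theorem totientRatio_zero : totientRatio 0 = 1 := by
  rw [totientRatio, Nat.primeFactors_zero, prod_empty]

theorem one_add_pow_le_one_add_mul {t : ℝ} (h0 : 0 ≤ t) (h1 : t ≤ 1) (c : ℕ) :
    (1 + t) ^ c ≤ 1 + (2 ^ c - 1) * t := by
  induction c with
  | zero => simp
  | succ c ih =>
    have h2 : (1 : ℝ) ≤ 2 ^ c := one_le_pow₀ one_le_two
    have htt : t * t ≤ 1 * t := mul_le_mul_of_nonneg_right h1 h0
    calc (1 + t) ^ (c + 1) = (1 + t) ^ c * (1 + t) := pow_succ _ _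
      _ ≤ (1 + (2 ^ c - 1) * t) * (1 + t) := by gcongr
      _ = 1 + 2 ^ c * t + (2 ^ c - 1) * (t * t) := by ring
      _ ≤ 1 + 2 ^ c * t + (2 ^ c - 1) * (1 * t) := by
        gcongr
      _ = 1 + (2 ^ (c + 1) - 1) * t := by ring

theorem one_add_one_div_sub_one_pow_le {x : ℝ} (hx : 2 ≤ x) (c : ℕ) :
    (1 + 1 / (x - 1)) ^ c ≤ 1 + 2 ^ (c + 1) / x := by
  have hx0 : 0 < x := by linarith
  have hx1 : 0 < x - 1 := by linarith
  have h1 : 1 / (x - 1) ≤ 1 := by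
    rw [div_le_one hx1]
    linarith
  have h2 : 1 / (x - 1) ≤ 2 / x := by
    rw [div_le_div_iff₀ hx1 hx0]
    linarith
  calc (1 + 1 / (x - 1)) ^ c ≤ 1 + (2 ^ c - 1) * (1 / (x - 1)) :=
        one_add_pow_le_one_add_mul (by positivity) h1 c
    _ ≤ 1 + 2 ^ c * (2 / x) := by
        gcongr
        exact sub_le_self _ zero_le_one
    _ = 1 + 2 ^ (c + 1) / x := by ring

theorem card_filter_subset_primeFactors_le {T : Finset ℕ} (hT : ∀ p ∈ T, p.Prime) (Y : ℕ) :
    (#{n ∈ Icc 1 Y | T ⊆ n.primeFactors} : ℝ) ≤ Y * ∏ p ∈ T, (p : ℝ)⁻¹ := by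
  have hcard : #{n ∈ Icc 1 Y | T ⊆ n.primeFactors} ≤ Y / ∏ p ∈ T, p := by
    rw [← Nat.Ioc_filter_dvd_card_eq_div]
    refine card_le_card fun n hn => ?_
    obtain ⟨hnY, hTn⟩ := mem_filter.1 hn
    exact mem_filter.2 ⟨hnY, prod_primes_dvd n (fun p hp => (hT p hp).prime)
      fun p hp => Nat.dvd_of_mem_primeFactors (hTn hp)⟩
  calc (#{n ∈ Icc 1 Y | T ⊆ n.primeFactors} : ℝ) ≤ (Y / ∏ p ∈ T, p : ℕ) := by exact_mod_cast hcard
    _ ≤ Y / (∏ p ∈ T, p : ℕ) := Nat.cast_div_le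
    _ = Y * ∏ p ∈ T, (p : ℝ)⁻¹ := by rw [prod_inv_distrib, ← div_eq_mul_inv, Nat.cast_prod]

theorem sum_Icc_prod_primeFactors_one_add_le {u : ℕ → ℝ} (hu : ∀ p, 0 ≤ u p) (Y : ℕ) :
    ∑ n ∈ Icc 1 Y, ∏ p ∈ n.primeFactors, (1 + u p) ≤ Y * ∏ p ∈ Y.primesLE, (1 + u p / p) := by
  have hprod (T : Finset ℕ) : 0 ≤ ∏ p ∈ T, u p := prod_nonneg fun p _ => hu p
  have hsub : ∀ n ∈ Icc 1 Y, n.primeFactors ⊆ Y.primesLE := fun n hn p hp => Nat.mem_primesLE.2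
    ⟨(Nat.le_of_mem_primeFactors hp).trans (mem_Icc.1 hn).2, Nat.prime_of_mem_primeFactors hp⟩
  calc ∑ n ∈ Icc 1 Y, ∏ p ∈ n.primeFactors, (1 + u p)
      = ∑ n ∈ Icc 1 Y, ∑ T ∈ Y.primesLE.powerset with T ⊆ n.primeFactors, ∏ p ∈ T, u p := by
        refine sum_congr rfl fun n hn => ?_
        rw [prod_one_add]
        congr 1
        ext T
        rw [mem_filter, mem_powerset, mem_powerset,
          and_iff_right_of_imp fun h => h.trans (hsub n hn)]
    _ = ∑ T ∈ Y.primesLE.powerset, #{n ∈ Icc 1 Y | T ⊆ n.primeFactors} * ∏ p ∈ T, u p := by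
        simp only [sum_filter]
        rw [sum_comm]
        refine sum_congr rfl fun T _ => ?_
        rw [← sum_filter, sum_const, nsmul_eq_mul]
    _ ≤ ∑ T ∈ Y.primesLE.powerset, Y * (∏ p ∈ T, (p : ℝ)⁻¹) * ∏ p ∈ T, u p := by
        refine sum_le_sum fun T hT => mul_le_mul_of_nonneg_right ?_ (hprod T)
        exact card_filter_subset_primeFactors_le
          (fun p hp => (Nat.mem_primesLE.1 (mem_powerset.1 hT hp)).2) Y
    _ = Y * ∏ p ∈ Y.primesLE, (1 + u p / p) := by
        rw [prod_one_add, mul_sum]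
        refine sum_congr rfl fun T _ => ?_
        rw [mul_assoc, ← prod_mul_distrib]
        simp only [inv_mul_eq_div]

theorem totientRatio_pow_le (n c : ℕ) :
    totientRatio n ^ c ≤ ∏ p ∈ n.primeFactors, (1 + 2 ^ (c + 1) / (p : ℝ)) := by
  rw [totientRatio, ← prod_pow]
  refine prod_le_prod (fun p hp => pow_nonneg (zero_le_one.trans ?_) c) fun p hp => ?_
  · exact one_le_one_add_one_div_sub_one
      (by exact_mod_cast (Nat.prime_of_mem_primeFactors hp).one_le)
  · exact one_add_one_div_sub_one_pow_le
      (by exact_mod_cast (Nat.prime_of_mem_primeFactors hp).two_le) c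

theorem exists_sum_Icc_totientRatio_pow_le (c : ℕ) :
    ∃ K : ℝ, 0 < K ∧ ∀ Y : ℕ, ∑ n ∈ Icc 1 Y, totientRatio n ^ c ≤ K * Y := by
  have hsum : Summable fun n : ℕ => (2 : ℝ) ^ (c + 1) * ((n : ℝ) ^ 2)⁻¹ :=
    (Real.summable_nat_pow_inv.2 one_lt_two).mul_left _
  refine ⟨Real.exp (∑' n : ℕ, 2 ^ (c + 1) * ((n : ℝ) ^ 2)⁻¹), Real.exp_pos _, fun Y => ?_⟩
  calc ∑ n ∈ Icc 1 Y, totientRatio n ^ c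
      ≤ ∑ n ∈ Icc 1 Y, ∏ p ∈ n.primeFactors, (1 + 2 ^ (c + 1) / (p : ℝ)) :=
        sum_le_sum fun n _ => totientRatio_pow_le n c
    _ ≤ Y * ∏ p ∈ Y.primesLE, (1 + 2 ^ (c + 1) / (p : ℝ) / p) :=
        sum_Icc_prod_primeFactors_one_add_le (fun p => by positivity) Y
    _ ≤ Y * ∏ p ∈ Y.primesLE, Real.exp (2 ^ (c + 1) * ((p : ℝ) ^ 2)⁻¹) := by
        gcongr with p
        rw [div_div, ← sq, ← div_eq_mul_inv, add_comm]
        exact Real.add_one_le_exp _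
    _ ≤ Y * Real.exp (∑' n : ℕ, 2 ^ (c + 1) * ((n : ℝ) ^ 2)⁻¹) := by
        rw [← Real.exp_sum]
        gcongr
        exact hsum.sum_le_tsum _ fun n _ => by positivity
    _ = _ := mul_comm _ _

theorem exists_sum_Icc_totientRatio_natAbs_pow_le (c : ℕ) :
    ∃ K : ℝ, 0 < K ∧ ∀ Y : ℕ,
      ∑ δ ∈ Icc (-(Y : ℤ)) Y, totientRatio δ.natAbs ^ c ≤ K * (Y + 1) := by
  obtain ⟨K, hK, hsum⟩ := exists_sum_Icc_totientRatio_pow_le c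
  refine ⟨2 * K + 1, by positivity, fun Y => ?_⟩
  have heven : Function.Even fun δ : ℤ => totientRatio δ.natAbs ^ c := fun δ => by
    simp only [Int.natAbs_neg]
  have hshift : ∑ n ∈ range (Y + 1), totientRatio n ^ c
      = ∑ n ∈ Icc 1 Y, totientRatio n ^ c + 1 := by
    rw [sum_range_succ', totientRatio_zero, one_pow, range_eq_Ico,
      sum_Ico_add' (fun n => totientRatio n ^ c) 0 Y 1, zero_add]
    rfl
  calc ∑ δ ∈ Icc (-(Y : ℤ)) Y, totientRatio δ.natAbs ^ c
      = 2 * ∑ n ∈ Icc 1 Y, totientRatio n ^ c + 1 := by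
        rw [sum_Icc_of_even_eq_range heven]
        simp only [Int.natAbs_natCast, Int.natAbs_zero, totientRatio_zero, one_pow, nsmul_eq_mul,
          hshift]
        push_cast
        ring
    _ ≤ (2 * K + 1) * (Y + 1) := by nlinarith [hsum Y, (Y.cast_nonneg : (0 : ℝ) ≤ Y)]

end TotientRatio

/-! ### Counting translates of a finite set that consist of prime powers -/

section Translates

section ProdUnion

variable {α ι : Type*} [DecidableEq α] {w : α → ℝ}

theorem prod_union_le_mul {s t : Finset α} (hs : ∀ p ∈ s, 1 ≤ w p) (ht : ∀ p ∈ t, 1 ≤ w p) :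
    ∏ p ∈ s ∪ t, w p ≤ (∏ p ∈ s, w p) * ∏ p ∈ t, w p := by
  have hunion : ∀ p ∈ s ∪ t, 1 ≤ w p := forall_mem_union.2 ⟨hs, ht⟩
  rw [← prod_union_inter]
  exact le_mul_of_one_le_right (zero_le_one.trans (one_le_prod hunion))
    (one_le_prod fun p hp => hs p (inter_subset_left hp))

theorem prod_biUnion_le_prod_prod {s : Finset ι} {t : ι → Finset α}
    (hw : ∀ i ∈ s, ∀ p ∈ t i, 1 ≤ w p) :
    ∏ p ∈ s.biUnion t, w p ≤ ∏ i ∈ s, ∏ p ∈ t i, w p := by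
  classical
  induction s using Finset.induction_on with
  | empty => simp
  | insert i s hi ih =>
    rw [forall_mem_insert] at hw
    have hs : ∀ p ∈ s.biUnion t, 1 ≤ w p := fun p hp => by
      obtain ⟨j, hj, hpj⟩ := mem_biUnion.1 hp
      exact hw.2 j hj p hpj
    rw [biUnion_insert, prod_insert hi]
    exact (prod_union_le_mul hw.1 hs).trans
      (mul_le_mul_of_nonneg_left (ih hw.2) (zero_le_one.trans (one_le_prod hw.1)))

end ProdUnion

/-- The product of the ratios `|b - b'| / φ(|b - b'|)` over the ordered pairs of distinct elements
of `B`; it measures how far the density of the translates of `B` consisting of prime powers may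
exceed the heuristic one. -/
noncomputable def offDiagTotientRatio (B : Finset ℤ) : ℝ :=
  ∏ x ∈ B.offDiag, totientRatio (x.1 - x.2).natAbs

theorem one_le_offDiagTotientRatio (B : Finset ℤ) : 1 ≤ offDiagTotientRatio B :=
  one_le_prod fun _ _ => one_le_totientRatio _

/-- The primes `p ≤ z` with `p > #B` modulo which the elements of `B` are distinct. -/
def siftingPrimes (B : Finset ℤ) (z : ℕ) : Finset ℕ :=
  {p ∈ z.primesLE | #B < p ∧ ∀ x ∈ B.offDiag, ¬ (p : ℤ) ∣ x.1 - x.2}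

/-- The `m < N` such that no element of `m + B` is divisible by a prime in `siftingPrimes B z`. -/
def siftedTranslates (B : Finset ℤ) (z N : ℕ) : Finset ℕ :=
  {m ∈ range N | ∀ p ∈ siftingPrimes B z, ¬ ∃ b ∈ B, (p : ℤ) ∣ m + b}

/-- The `m < N` such that all elements of `m + B` are prime powers. -/
def primePowTranslates (B : Finset ℤ) (N : ℕ) : Finset ℕ :=
  {m ∈ range N | ∀ b ∈ B, IsPrimePow ((m : ℤ) + b).toNat}

theorem siftingPrimes_subset (B : Finset ℤ) (z : ℕ) : siftingPrimes B z ⊆ z.primesLE :=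
  filter_subset _ _

theorem prod_primesLE_sdiff_siftingPrimes_le (B : Finset ℤ) (z : ℕ) :
    ∏ p ∈ z.primesLE \ siftingPrimes B z, (1 + 1 / ((p : ℝ) - 1))
      ≤ (∏ p ∈ (#B).primesLE, (1 + 1 / ((p : ℝ) - 1))) * offDiagTotientRatio B := by
  have hone {p : ℕ} (hp : p.Prime) : 1 ≤ 1 + 1 / ((p : ℝ) - 1) :=
    one_le_one_add_one_div_sub_one (by exact_mod_cast hp.one_le)
  have hsmall : ∀ p ∈ (#B).primesLE, 1 ≤ 1 + 1 / ((p : ℝ) - 1) :=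
    fun p hp => hone (Nat.mem_primesLE.1 hp).2
  have hdiff : ∀ x ∈ B.offDiag, ∀ p ∈ (x.1 - x.2).natAbs.primeFactors,
      1 ≤ 1 + 1 / ((p : ℝ) - 1) := fun x _ p hp => hone (Nat.prime_of_mem_primeFactors hp)
  set E := B.offDiag.biUnion fun x => (x.1 - x.2).natAbs.primeFactors
  have hE1 : ∀ p ∈ E, 1 ≤ 1 + 1 / ((p : ℝ) - 1) := fun p hp => by
    obtain ⟨x, hx, hpx⟩ := mem_biUnion.1 hp
    exact hdiff x hx p hpx
  have hsub : z.primesLE \ siftingPrimes B z ⊆ (#B).primesLE ∪ E := fun p hp => by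
    obtain ⟨hpz, hpB⟩ := mem_sdiff.1 hp
    have hprime := (Nat.mem_primesLE.1 hpz).2
    rw [siftingPrimes, mem_filter, not_and, not_and] at hpB
    by_cases hcard : #B < p
    · have hdvd := hpB hpz hcard
      push Not at hdvd
      obtain ⟨x, hx, hpx⟩ := hdvd
      refine mem_union_right _ (mem_biUnion.2 ⟨x, hx, Nat.mem_primeFactors.2
        ⟨hprime, Int.natCast_dvd.1 hpx, Int.natAbs_ne_zero.2 ?_⟩⟩)
      exact sub_ne_zero.2 (mem_offDiag.1 hx).2.2
    · exact mem_union_left _ (Nat.mem_primesLE.2 ⟨not_lt.1 hcard, hprime⟩)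
  calc ∏ p ∈ z.primesLE \ siftingPrimes B z, (1 + 1 / ((p : ℝ) - 1))
      ≤ ∏ p ∈ (#B).primesLE ∪ E, (1 + 1 / ((p : ℝ) - 1)) := by
        refine prod_le_prod_of_subset_of_one_le hsub (fun p hp => ?_) fun p hp _ => ?_
        · exact zero_le_one.trans (hone (Nat.mem_primesLE.1 (sdiff_subset hp)).2)
        · exact (mem_union.1 hp).elim (hsmall p) (hE1 p)
    _ ≤ _ := prod_union_le_mul hsmall hE1
    _ ≤ _ := mul_le_mul_of_nonneg_left (prod_biUnion_le_prod_prod hdiff)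
        (zero_le_one.trans (one_le_prod hsmall))

theorem card_filter_exists_dvd_add {B : Finset ℤ} {p : ℕ} (hp : 0 < p)
    (hB : ∀ x ∈ B.offDiag, ¬ (p : ℤ) ∣ x.1 - x.2) :
    #{n ∈ range p | ∃ b ∈ B, (p : ℤ) ∣ (n : ℕ) + b} = #B := by
  have hp0 : (0 : ℤ) < p := by exact_mod_cast hp
  have hnonneg (b : ℤ) : 0 ≤ -b % p := Int.emod_nonneg _ hp0.ne'
  have himage : {n ∈ range p | ∃ b ∈ B, (p : ℤ) ∣ (n : ℕ) + b}
      = B.image fun b => (-b % p).toNat := by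
    ext n
    rw [mem_filter, mem_range, mem_image]
    constructor
    · rintro ⟨hn, b, hb, hdvd⟩
      refine ⟨b, hb, ?_⟩
      have hmod : -b % p = n % p := Int.modEq_iff_dvd.2 (by rwa [sub_neg_eq_add])
      rw [hmod, Int.emod_eq_of_lt n.cast_nonneg (by exact_mod_cast hn), Int.toNat_natCast]
    · rintro ⟨b, hb, rfl⟩
      refine ⟨(Int.toNat_lt (hnonneg b)).2 (Int.emod_lt_of_pos _ hp0), b, hb, ?_⟩
      rw [Int.toNat_of_nonneg (hnonneg b), ← sub_neg_eq_add]
      exact (Int.mod_modEq (-b) p).symm.dvd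
  rw [himage, card_image_of_injOn]
  intro b hb b' hb' h
  by_contra hne
  refine hB (b, b') (mem_offDiag.2 ⟨hb, hb', hne⟩) ?_
  have hmod : -b ≡ -b' [ZMOD p] := by
    rw [Int.ModEq, ← Int.toNat_of_nonneg (hnonneg b), ← Int.toNat_of_nonneg (hnonneg b')]
    exact congrArg _ h
  simpa only [neg_sub_neg] using hmod.dvd

theorem card_siftedTranslates_mul_log_pow_le (B : Finset ℤ) {z : ℕ} (hz : 1 ≤ z) (N : ℕ) :
    (#(siftedTranslates B z N) : ℝ) * Real.log (z + 1) ^ #B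
      ≤ ((∏ p ∈ (#B).primesLE, (1 + 1 / ((p : ℝ) - 1))) * offDiagTotientRatio B) ^ #B
        * (N + 2 * (z : ℝ) ^ (6 * #B)) := by
  set P := siftingPrimes B z
  have hP (p : ℕ) (hp : p ∈ P) :
      p ∈ z.primesLE ∧ #B < p ∧ ∀ x ∈ B.offDiag, ¬ (p : ℤ) ∣ x.1 - x.2 := mem_filter.1 hp
  have hprime (p : ℕ) (hp : p ∈ P) : p.Prime := (Nat.mem_primesLE.1 (hP p hp).1).2
  have hcard (p : ℕ) (hp : p ∈ P) : #B < p := (hP p hp).2.1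
  set S := ∑ T ∈ smallProdSubsets P (z ^ #B), ∏ p ∈ T, (#B : ℝ) / (p - #B)
  have hS : 0 ≤ S := sum_smallProdSubsets_nonneg (fun p hp => div_nonneg (Nat.cast_nonneg _)
    (sub_nonneg.2 (by exact_mod_cast (hcard p hp).le))) _
  have hsieve : (#(siftedTranslates B z N) : ℝ) * S ≤ N + 2 * ((z ^ #B : ℕ) : ℝ) ^ 6 := by
    refine card_mul_sum_le_of_sifted (bad := fun p m => ∃ b ∈ B, (p : ℤ) ∣ m + b) hprime hcard
      (fun p _ n => ?_) (fun p hp => card_filter_exists_dvd_add (hprime p hp).pos (hP p hp).2.2)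
      (Nat.one_le_pow _ _ hz) (filter_subset _ _) fun n hn => (mem_filter.1 hn).2
    simp only [Nat.cast_add, add_right_comm, dvd_add_self_right]
  set W := (∏ p ∈ (#B).primesLE, (1 + 1 / ((p : ℝ) - 1))) * offDiagTotientRatio B
  have hexcl : 0 ≤ ∏ p ∈ z.primesLE \ P, (1 + 1 / ((p : ℝ) - 1)) := prod_nonneg fun p hp =>
    zero_le_one.trans (one_le_one_add_one_div_sub_one
      (by exact_mod_cast (Nat.mem_primesLE.1 (sdiff_subset hp)).2.one_le))
  have hexclW := prod_primesLE_sdiff_siftingPrimes_le B z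
  have hW : 0 ≤ W := hexcl.trans hexclW
  calc (#(siftedTranslates B z N) : ℝ) * Real.log (z + 1) ^ #B
      ≤ #(siftedTranslates B z N) *
          ((∏ p ∈ z.primesLE \ P, (1 + 1 / ((p : ℝ) - 1))) ^ #B * S) := by
        gcongr
        exact log_add_one_pow_le_sieveDensity (siftingPrimes_subset B z) hcard
    _ ≤ #(siftedTranslates B z N) * (W ^ #B * S) := by gcongr
    _ = W ^ #B * (#(siftedTranslates B z N) * S) := by ring
    _ ≤ W ^ #B * (N + 2 * ((z ^ #B : ℕ) : ℝ) ^ 6) := by gcongr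
    _ = W ^ #B * (N + 2 * (z : ℝ) ^ (6 * #B)) := by
        rw [Nat.cast_pow, ← pow_mul, mul_comm (#B)]

theorem mem_image_pow_of_isPrimePow {p n Y : ℕ} (hp : p.Prime) (hn : IsPrimePow n) (hpn : p ∣ n)
    (hnY : n ≤ Y) : n ∈ (range (Nat.log 2 Y + 1)).image (p ^ ·) := by
  obtain ⟨q, e, hq, -, rfl⟩ := (isPrimePow_nat_iff n).1 hn
  obtain rfl := (Nat.prime_dvd_prime_iff_eq hp hq).1 (hp.dvd_of_dvd_pow hpn)
  refine mem_image_of_mem _ (mem_range.2 (Nat.lt_succ_of_le (Nat.le_log_of_pow_le one_lt_two ?_)))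
  exact (Nat.pow_le_pow_left hp.two_le e).trans hnY

theorem card_filter_isPrimePow_dvd_le {p : ℕ} (hp : p.Prime) {b : ℤ} {N Y : ℕ}
    (hY : ∀ m < N, ((m : ℤ) + b).toNat ≤ Y) :
    #{m ∈ range N | IsPrimePow (((m : ℕ) : ℤ) + b).toNat ∧ (p : ℤ) ∣ m + b}
      ≤ Nat.log 2 Y + 1 := by
  have hpos {m : ℕ} (hm : IsPrimePow ((m : ℤ) + b).toNat) : 0 ≤ (m : ℤ) + b :=
    (Int.pos_iff_toNat_pos.2 hm.pos).le
  refine (card_le_card_of_injOn (fun m : ℕ => ((m : ℤ) + b).toNat) (fun m hm => ?_)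
    fun m hm m' hm' h => ?_).trans ((card_image_le (f := (p ^ ·))).trans (card_range _).le)
  · obtain ⟨hmN, hmpow, hdvd⟩ := mem_filter.1 hm
    refine mem_image_pow_of_isPrimePow hp hmpow ?_ (hY m (mem_range.1 hmN))
    rwa [← Int.natCast_dvd_natCast, Int.toNat_of_nonneg (hpos hmpow)]
  · have hm0 := hpos (mem_filter.1 hm).2.1
    have hm0' := hpos (mem_filter.1 hm').2.1
    simp only at h
    lia

theorem card_primePowTranslates_le (B : Finset ℤ) (z : ℕ) {N Y : ℕ}
    (hY : ∀ b ∈ B, ∀ m < N, ((m : ℤ) + b).toNat ≤ Y) :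
    #(primePowTranslates B N) ≤ #(siftedTranslates B z N) + z * #B * (Nat.log 2 Y + 1) := by
  set E : ℕ × ℤ → Finset ℕ := fun x =>
    {m ∈ range N | IsPrimePow (((m : ℕ) : ℤ) + x.2).toNat ∧ (x.1 : ℤ) ∣ m + x.2}
  have hcover : primePowTranslates B N ⊆
      siftedTranslates B z N ∪ (siftingPrimes B z ×ˢ B).biUnion E := fun m hm => by
    obtain ⟨hmN, hmB⟩ := mem_filter.1 hm
    by_cases hsifted : ∀ p ∈ siftingPrimes B z, ¬ ∃ b ∈ B, (p : ℤ) ∣ m + b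
    · exact mem_union_left _ (mem_filter.2 ⟨hmN, hsifted⟩)
    · push Not at hsifted
      obtain ⟨p, hp, b, hb, hdvd⟩ := hsifted
      exact mem_union_right _ (mem_biUnion.2
        ⟨(p, b), mem_product.2 ⟨hp, hb⟩, mem_filter.2 ⟨hmN, hmB b hb, hdvd⟩⟩)
  have hE : ∀ x ∈ siftingPrimes B z ×ˢ B, #(E x) ≤ Nat.log 2 Y + 1 := fun x hx => by
    obtain ⟨hp, hb⟩ := mem_product.1 hx
    exact card_filter_isPrimePow_dvd_le
      (Nat.mem_primesLE.1 (siftingPrimes_subset B z hp)).2 (hY x.2 hb)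
  have hprimes : #(siftingPrimes B z) ≤ z := by
    suffices h : siftingPrimes B z ⊆ Icc 1 z by simpa using card_le_card h
    intro p hp
    obtain ⟨hpz, hprime⟩ := Nat.mem_primesLE.1 (siftingPrimes_subset B z hp)
    exact mem_Icc.2 ⟨hprime.one_le, hpz⟩
  calc #(primePowTranslates B N)
      ≤ #(siftedTranslates B z N) + #((siftingPrimes B z ×ˢ B).biUnion E) :=
        (card_le_card hcover).trans (card_union_le _ _)
    _ ≤ #(siftedTranslates B z N) + #(siftingPrimes B z ×ˢ B) * (Nat.log 2 Y + 1) := by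
        gcongr
        exact card_biUnion_le_card_mul _ _ _ hE
    _ ≤ #(siftedTranslates B z N) + z * #B * (Nat.log 2 Y + 1) := by
        rw [card_product]
        gcongr

theorem exists_rpow_half_mul_log_pow_le (s : ℕ) :
    ∃ C : ℝ, 0 < C ∧ ∀ X : ℝ, 1 ≤ X → X ^ (1 / 2 : ℝ) * (1 + Real.log X) ^ s ≤ C * X := by
  rcases Nat.eq_zero_or_pos s with rfl | hs
  · exact ⟨1, one_pos, fun X hX => by simpa using Real.rpow_le_self_of_one_le hX (by norm_num)⟩
  set ε : ℝ := 1 / (2 * s) with hε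
  have hε0 : 0 < ε := by positivity
  refine ⟨(1 + 1 / ε) ^ s, by positivity, fun X hX => ?_⟩
  have hX0 : 0 < X := zero_lt_one.trans_le hX
  have hlog : 1 + Real.log X ≤ (1 + 1 / ε) * X ^ ε := by
    rw [add_mul, one_mul, one_div_mul_eq_div]
    exact add_le_add (Real.one_le_rpow hX hε0.le) (Real.log_le_rpow_div hX0.le hε0)
  calc X ^ (1 / 2 : ℝ) * (1 + Real.log X) ^ s
      ≤ X ^ (1 / 2 : ℝ) * ((1 + 1 / ε) * X ^ ε) ^ s := by
        gcongr
        exact add_nonneg zero_le_one (Real.log_nonneg hX)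
    _ = X ^ (1 / 2 : ℝ) * ((1 + 1 / ε) ^ s * X ^ (1 / 2 : ℝ)) := by
        rw [mul_pow, ← Real.rpow_mul_natCast hX0.le]
        congr 3
        rw [hε]
        field_simp
    _ = (1 + 1 / ε) ^ s * X := by
        rw [mul_left_comm, ← Real.rpow_add hX0]
        norm_num

theorem exists_nat_pow_le_rpow_half {k : ℕ} (hk : 0 < k) {X : ℝ} (hX : 1 ≤ X) :
    ∃ z : ℕ, 1 ≤ z ∧ (z : ℝ) ^ k ≤ X ^ (1 / 2 : ℝ) ∧
      Real.log X ≤ 2 * k * Real.log (z + 1) := by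
  have hX0 : 0 < X := zero_lt_one.trans_le hX
  set θ : ℝ := 1 / (2 * k) with hθ
  have hθ0 : 0 ≤ θ := by positivity
  have hXθ : 0 < X ^ θ := Real.rpow_pos_of_pos hX0 θ
  refine ⟨⌊X ^ θ⌋₊, Nat.le_floor (by simpa using Real.one_le_rpow hX hθ0), ?_, ?_⟩
  · calc (⌊X ^ θ⌋₊ : ℝ) ^ k ≤ (X ^ θ) ^ k := by
          gcongr
          exact Nat.floor_le hXθ.le
      _ = X ^ (1 / 2 : ℝ) := by
          rw [← Real.rpow_mul_natCast hX0.le, hθ]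
          congr 1
          field_simp
  · calc Real.log X = 2 * k * Real.log (X ^ θ) := by
          rw [Real.log_rpow hX0, hθ]
          field_simp
      _ ≤ 2 * k * Real.log (⌊X ^ θ⌋₊ + 1) := by
          gcongr
          exact (Nat.lt_floor_add_one _).le

theorem natLog_add_one_le {c X : ℝ} (hc : 1 ≤ c) (hX : 1 ≤ X) {Y : ℕ} (hY : (Y : ℝ) ≤ c * X) :
    (Nat.log 2 Y + 1 : ℝ) ≤ (2 * c + 1) * (1 + Real.log X) := by
  have hX0 : 0 ≤ Real.log X := Real.log_nonneg hX
  have hlogc : Real.log c ≤ c - 1 := Real.log_le_sub_one_of_pos (by linarith)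
  have hlogcX : Real.log (c * X) = Real.log c + Real.log X :=
    Real.log_mul (by linarith) (by linarith)
  have hlog : (Nat.log 2 Y : ℝ) ≤ 2 * Real.log (c * X) := by
    rcases Y.eq_zero_or_pos with rfl | hY0
    · simpa using Real.log_nonneg (one_le_mul_of_one_le_of_one_le hc hX)
    have hpow : (2 : ℝ) ^ Nat.log 2 Y ≤ c * X :=
      le_trans (by exact_mod_cast Nat.pow_log_le_self 2 hY0.ne') hY
    have hmul : Nat.log 2 Y * Real.log 2 ≤ Real.log (c * X) := by
      rw [← Real.log_pow]
      exact Real.log_le_log (by positivity) hpow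
    nlinarith [Real.log_two_gt_d9, (Nat.cast_nonneg _ : (0 : ℝ) ≤ Nat.log 2 Y)]
  nlinarith

theorem exists_card_siftedTranslates_mul_log_pow_le (r : ℕ) :
    ∃ C : ℝ, 0 < C ∧ ∀ X : ℝ, 2 ≤ X → ∃ z : ℕ, (z : ℝ) ≤ X ^ (1 / 2 : ℝ) ∧
      ∀ B : Finset ℤ, #B = r → (#(siftedTranslates B z (⌊X⌋₊ + 1)) : ℝ) * (1 + Real.log X) ^ r
        ≤ C * X * offDiagTotientRatio B ^ r := by
  set P : ℝ := ∏ p ∈ r.primesLE, (1 + 1 / ((p : ℝ) - 1))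
  have hP : 1 ≤ P := one_le_prod fun p hp => one_le_one_add_one_div_sub_one
    (by exact_mod_cast (Nat.mem_primesLE.1 hp).2.one_le)
  refine ⟨(36 * (r + 1) * P) ^ r * 4, by positivity, fun X hX => ?_⟩
  have hX1 : 1 ≤ X := by linarith
  have hlogX : 1 / 2 ≤ Real.log X := by
    linarith [Real.log_two_gt_d9, Real.log_le_log two_pos hX]
  obtain ⟨z, hz, hzpow, hzlog⟩ := exists_nat_pow_le_rpow_half (k := 6 * (r + 1)) (by lia) hX1
  have hz1 : (1 : ℝ) ≤ z := by exact_mod_cast hz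
  refine ⟨z, (le_self_pow₀ hz1 (by lia)).trans hzpow, ?_⟩
  rintro B rfl
  set R := offDiagTotientRatio B
  have hR : 1 ≤ R := one_le_offDiagTotientRatio B
  have hlog : 1 + Real.log X ≤ 36 * (#B + 1) * Real.log (z + 1) := by
    push_cast at hzlog
    linarith
  have hlevel : ((⌊X⌋₊ + 1 : ℕ) : ℝ) + 2 * (z : ℝ) ^ (6 * #B) ≤ 4 * X := by
    have hpow : (z : ℝ) ^ (6 * #B) ≤ X :=
      ((pow_le_pow_right₀ hz1 (by lia)).trans hzpow).trans
        (Real.rpow_le_self_of_one_le hX1 (by norm_num))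
    push_cast
    linarith [Nat.floor_le (zero_le_one.trans hX1)]
  calc (#(siftedTranslates B z (⌊X⌋₊ + 1)) : ℝ) * (1 + Real.log X) ^ #B
      ≤ #(siftedTranslates B z (⌊X⌋₊ + 1)) * (36 * (#B + 1) * Real.log (z + 1)) ^ #B := by gcongr
    _ = (36 * (#B + 1)) ^ #B *
          (#(siftedTranslates B z (⌊X⌋₊ + 1)) * Real.log (z + 1) ^ #B) := by
        rw [mul_pow]
        ring
    _ ≤ (36 * (#B + 1)) ^ #B * ((P * R) ^ #B * (4 * X)) := by
        refine mul_le_mul_of_nonneg_left ?_ (by positivity)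
        exact (card_siftedTranslates_mul_log_pow_le B hz _).trans (by gcongr)
    _ = (36 * (#B + 1) * P) ^ #B * 4 * X * R ^ #B := by
        rw [mul_pow P, mul_pow _ P]
        ring

theorem exists_card_primePowTranslates_mul_log_pow_le (r : ℕ) {κ : ℝ} (hκ : 0 ≤ κ) :
    ∃ C : ℝ, 0 < C ∧ ∀ B : Finset ℤ, #B = r → ∀ X : ℝ, 2 ≤ X → (∀ b ∈ B, (b : ℝ) ≤ κ * X) →
      (#(primePowTranslates B (⌊X⌋₊ + 1)) : ℝ) * (1 + Real.log X) ^ r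
        ≤ C * X * offDiagTotientRatio B ^ r := by
  obtain ⟨C₁, hC₁, hlogpow⟩ := exists_rpow_half_mul_log_pow_le (r + 1)
  obtain ⟨A, hA, hsifted⟩ := exists_card_siftedTranslates_mul_log_pow_le r
  set E : ℝ := 2 * (1 + κ) + 1
  refine ⟨A + r * E * C₁, by positivity, ?_⟩
  rintro B rfl X hX hBX
  have hX1 : 1 ≤ X := by linarith
  have hR : 1 ≤ offDiagTotientRatio B := one_le_offDiagTotientRatio B
  obtain ⟨z, hz, hsieve⟩ := hsifted X hX
  set L := 1 + Real.log X
  have hL0 : 0 ≤ L := add_nonneg zero_le_one (Real.log_nonneg hX1)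
  set Y := ⌊(1 + κ) * X⌋₊
  have hY : ∀ b ∈ B, ∀ m < ⌊X⌋₊ + 1, ((m : ℤ) + b).toNat ≤ Y := fun b hb m hm => by
    rw [Int.toNat_le, Int.natCast_floor_eq_floor (by positivity), Int.le_floor]
    push_cast
    linarith [hBX b hb, (Nat.le_floor_iff (by positivity : 0 ≤ X)).1 (Nat.lt_succ_iff.1 hm)]
  have hlogY : (Nat.log 2 Y + 1 : ℝ) ≤ E * L :=
    natLog_add_one_le (by linarith) hX1 (Nat.floor_le (by positivity))
  have hrest : (z : ℝ) * #B * (E * L) * L ^ #B ≤ #B * E * C₁ * X * offDiagTotientRatio B ^ #B := by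
    calc (z : ℝ) * #B * (E * L) * L ^ #B = #B * E * (z * L ^ (#B + 1)) := by ring
      _ ≤ #B * E * (C₁ * X) := by
          refine mul_le_mul_of_nonneg_left ?_ (by positivity)
          exact (mul_le_mul_of_nonneg_right hz (by positivity)).trans (hlogpow X hX1)
      _ = #B * E * C₁ * X := by ring
      _ ≤ _ := le_mul_of_one_le_right (by positivity) (one_le_pow₀ hR)
  calc (#(primePowTranslates B (⌊X⌋₊ + 1)) : ℝ) * L ^ #B
      ≤ (#(siftedTranslates B z (⌊X⌋₊ + 1)) + z * #B * (E * L)) * L ^ #B := by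
        gcongr
        refine le_trans (b := (#(siftedTranslates B z (⌊X⌋₊ + 1)) : ℝ) +
          z * #B * (Nat.log 2 Y + 1)) ?_ (by gcongr)
        exact_mod_cast card_primePowTranslates_le B z hY
    _ ≤ A * X * offDiagTotientRatio B ^ #B +
          #B * E * C₁ * X * offDiagTotientRatio B ^ #B := by
        rw [add_mul]
        exact add_le_add (hsieve B rfl) hrest
    _ = (A + #B * E * C₁) * X * offDiagTotientRatio B ^ #B := by ring

end Translates

/-! ### Lattice points determined by few of their coordinates -/

section DeterminedPoints

variable {ι α : Type*}

theorem injOn_restrict_erase [DecidableEq ι] {U : Set (ι → α)} {R : Finset ι} {q : ι}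
    (hR : Set.InjOn R.restrict U)
    (hq : ∀ u ∈ U, ∀ v ∈ U, (∀ i ∈ R.erase q, u i = v i) → u q = v q) :
    Set.InjOn (R.erase q).restrict U := by
  intro u hu v hv huv
  have hcoord : ∀ i ∈ R.erase q, u i = v i := fun i hi => congrFun huv ⟨i, hi⟩
  refine hR hu hv (funext fun ⟨i, hi⟩ => ?_)
  by_cases hiq : i = q
  · subst hiq
    exact hq u hu v hv hcoord
  · exact hcoord i (mem_erase.2 ⟨hiq, hi⟩)

theorem injOn_restrict_erase_of_sum_mul_eq [DecidableEq ι] [Ring α] [NoZeroDivisors α]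
    {U : Set (ι → α)} {R : Finset ι} {q : ι} {w : ι → α} {c : α} (hR : Set.InjOn R.restrict U)
    (hw : ∀ u ∈ U, ∑ i ∈ R, w i * u i = c) (hq : q ∈ R) (hwq : w q ≠ 0) :
    Set.InjOn (R.erase q).restrict U := by
  refine injOn_restrict_erase hR fun u hu v hv huv => mul_left_cancel₀ hwq ?_
  have hsum := (hw u hu).trans (hw v hv).symm
  rw [← add_sum_erase _ _ hq, ← add_sum_erase _ _ hq,
    sum_congr rfl fun i hi => by rw [huv i hi]] at hsum
  exact add_right_cancel hsum

theorem card_le_pow_of_injOn_restrict {U : Finset (ι → α)} {A : Finset α} {R : Finset ι}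
    (hU : ∀ u ∈ U, ∀ i ∈ R, u i ∈ A) (hR : Set.InjOn R.restrict (U : Set (ι → α))) :
    #U ≤ #A ^ #R := by
  classical
  refine (card_le_card_of_injOn (t := Fintype.piFinset fun _ : R => A) R.restrict
    (fun u hu => Fintype.mem_piFinset.2 fun i => hU u hu i i.2) hR).trans_eq ?_
  rw [Fintype.card_piFinset, prod_const, card_univ, Fintype.card_coe]

variable {U : Finset (ι → ℤ)} {R : Finset ι} {h : ℕ}

theorem card_le_add_one_pow_of_injOn_restrict (hU : ∀ u ∈ U, ∀ i ∈ R, u i ∈ Icc (0 : ℤ) h)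
    (hR : Set.InjOn R.restrict (U : Set (ι → ℤ))) : (#U : ℝ) ≤ ((h : ℝ) + 1) ^ #R := by
  have hcard := card_le_pow_of_injOn_restrict hU hR
  rw [Int.card_Icc, sub_zero, Int.toNat_natCast_add_one] at hcard
  exact_mod_cast hcard

variable {f : ℤ → ℝ} {s s' : ι} {τ : ℤ}

theorem sum_comp_sub_add_le_mul_sum (hU : ∀ u ∈ U, ∀ i ∈ R, u i ∈ Icc (0 : ℤ) h)
    (hR : Set.InjOn R.restrict (U : Set (ι → ℤ))) (hs : s ∈ R) (hs' : s' ∈ R) (hss' : s ≠ s')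
    (hf : ∀ δ, 0 ≤ f δ) {T : ℕ} (hτ : |τ| ≤ T) :
    ∑ u ∈ U, f (u s - u s' + τ)
      ≤ ((h : ℝ) + 1) ^ (#R - 1) * ∑ δ ∈ Icc (-((h + T : ℕ) : ℤ)) ((h + T : ℕ) : ℤ), f δ := by
  classical
  have hmaps : ∀ u ∈ U, u s - u s' + τ ∈ Icc (-((h + T : ℕ) : ℤ)) ((h + T : ℕ) : ℤ) := by
    intro u hu
    have hus := mem_Icc.1 (hU u hu s hs)
    have hus' := mem_Icc.1 (hU u hu s' hs')
    rw [abs_le] at hτ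
    rw [mem_Icc]
    lia
  rw [← sum_fiberwise_of_maps_to hmaps, mul_sum]
  refine sum_le_sum fun δ _ => ?_
  have hfiber : Set.InjOn (R.erase s).restrict
      (({u ∈ U | u s - u s' + τ = δ} : Finset (ι → ℤ)) : Set (ι → ℤ)) := by
    refine injOn_restrict_erase (hR.mono (coe_subset.2 (filter_subset _ _)))
      fun u hu v hv huv => ?_
    have hδ := (mem_filter.1 hu).2.trans (mem_filter.1 hv).2.symm
    rw [huv s' (mem_erase.2 ⟨hss'.symm, hs'⟩)] at hδ
    linarith
  calc ∑ u ∈ U with u s - u s' + τ = δ, f (u s - u s' + τ)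
      = ∑ u ∈ U with u s - u s' + τ = δ, f δ :=
        sum_congr rfl fun u hu => by rw [(mem_filter.1 hu).2]
    _ = #{u ∈ U | u s - u s' + τ = δ} * f δ := by rw [sum_const, nsmul_eq_mul]
    _ ≤ ((h : ℝ) + 1) ^ (#R - 1) * f δ := by
      refine mul_le_mul_of_nonneg_right ?_ (hf δ)
      rw [← card_erase_of_mem hs]
      exact card_le_add_one_pow_of_injOn_restrict
        (fun u hu i hi => hU u (mem_filter.1 hu).1 i (mem_of_mem_erase hi)) hfiber

variable {K : ℝ}

theorem sum_comp_le_of_abs_le (hU : ∀ u ∈ U, ∀ i ∈ R, u i ∈ Icc (0 : ℤ) h)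
    (hR : Set.InjOn R.restrict (U : Set (ι → ℤ))) (hf : ∀ δ, 0 ≤ f δ)
    (hK : ∀ Y : ℕ, ∑ δ ∈ Icc (-(Y : ℤ)) Y, f δ ≤ K * (Y + 1)) {g : (ι → ℤ) → ℤ} {W : ℕ}
    (hg : ∀ u ∈ U, |g u| ≤ W) :
    ∑ u ∈ U, f (g u) ≤ K * (W + 1) * ((h : ℝ) + 1) ^ #R := by
  have hpointwise : ∀ u ∈ U, f (g u) ≤ K * (W + 1) := fun u hu =>
    (single_le_sum (fun δ _ => hf δ) (mem_Icc.2 (abs_le.1 (hg u hu)))).trans (hK W)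
  refine (sum_le_card_nsmul _ _ _ hpointwise).trans ?_
  rw [nsmul_eq_mul, mul_comm]
  exact mul_le_mul_of_nonneg_left (card_le_add_one_pow_of_injOn_restrict hU hR)
    ((sum_nonneg fun δ _ => hf δ).trans (hK W))

theorem sum_comp_sub_add_le (hU : ∀ u ∈ U, ∀ i ∈ R, u i ∈ Icc (0 : ℤ) h)
    (hR : Set.InjOn R.restrict (U : Set (ι → ℤ))) (hf : ∀ δ, 0 ≤ f δ)
    (hK : ∀ Y : ℕ, ∑ δ ∈ Icc (-(Y : ℤ)) Y, f δ ≤ K * (Y + 1)) (hs : s ∈ R) (hs' : s' ∈ R)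
    {T : ℕ} (hτ : |τ| ≤ T) :
    ∑ u ∈ U, f (u s - u s' + τ) ≤ K * (T + 1) * ((h : ℝ) + 1) ^ #R := by
  have hK0 : 0 ≤ K := by simpa using (sum_nonneg fun δ _ => hf δ).trans (hK 0)
  rcases eq_or_ne s s' with rfl | hss'
  · exact sum_comp_le_of_abs_le hU hR hf hK fun u _ => by rwa [sub_self, zero_add]
  calc ∑ u ∈ U, f (u s - u s' + τ)
      ≤ ((h : ℝ) + 1) ^ (#R - 1) * (K * ((h + T : ℕ) + 1)) :=
        (sum_comp_sub_add_le_mul_sum hU hR hs hs' hss' hf hτ).trans (by gcongr; exact hK _)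
    _ ≤ ((h : ℝ) + 1) ^ (#R - 1) * (K * ((T + 1) * (h + 1))) := by
        gcongr
        push_cast
        linarith [mul_nonneg (T.cast_nonneg : (0 : ℝ) ≤ T) (h.cast_nonneg : (0 : ℝ) ≤ h)]
    _ = K * (T + 1) * (((h : ℝ) + 1) ^ (#R - 1) * (h + 1)) := by ring
    _ = K * (T + 1) * ((h : ℝ) + 1) ^ #R := by
        rw [pow_sub_one_mul (card_pos.2 ⟨s, hs⟩).ne']

end DeterminedPoints

/-! ### Lattice points whose coordinates are clustered -/

/-- The coordinates of `u` are clustered at scale `T`: those indexed by `Q` are more than `T` apart,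
and every other one differs by an offset `|t i| ≤ T` from the coordinate at its representative
`σ i ∈ Q`. -/
structure IsClustered {ι : Type*} (T : ℕ) (Q : Finset ι) (σ : ι → ι) (t u : ι → ℤ) : Prop where
  mem : ∀ i, σ i ∈ Q
  apply_of_mem : ∀ q ∈ Q, σ q = q
  eq_add : ∀ i, u i = u (σ i) + t i
  abs_le : ∀ i, |t i| ≤ T
  lt_abs_sub : ∀ q ∈ Q, ∀ q' ∈ Q, q ≠ q' → (T : ℤ) < |u q - u q'|

/-- Take for `Q` a largest set of indices with coordinates more than `T` apart. -/
theorem exists_isClustered {ι : Type*} [Finite ι] (T : ℕ) (u : ι → ℤ) :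
    ∃ Q σ t, IsClustered T Q σ t u := by
  classical
  cases nonempty_fintype ι
  set IsSeparated : Finset ι → Prop :=
    fun Q => ∀ q ∈ Q, ∀ q' ∈ Q, q ≠ q' → (T : ℤ) < |u q - u q'|
  obtain ⟨Q, hQ, hmax⟩ := exists_max_image {Q | IsSeparated Q} card
    ⟨∅, mem_filter.2 ⟨mem_univ _, fun q hq => absurd hq (notMem_empty q)⟩⟩
  have hsep : IsSeparated Q := (mem_filter.1 hQ).2
  have hrep : ∀ i, ∃ q ∈ Q, |u i - u q| ≤ T ∧ (i ∈ Q → q = i) := by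
    intro i
    by_cases hi : i ∈ Q
    · exact ⟨i, hi, by simp, fun _ => rfl⟩
    by_contra! hcon
    have hfar : ∀ q ∈ Q, (T : ℤ) < |u i - u q| := fun q hq => by
      by_contra! hle
      exact hi (hcon q hq hle).1
    have hinsert : IsSeparated (insert i Q) := fun q hq q' hq' hne => by
      rcases mem_insert.1 hq with rfl | hqQ <;> rcases mem_insert.1 hq' with rfl | hqQ'
      · exact absurd rfl hne
      · exact hfar q' hqQ'
      · exact abs_sub_comm (u q) _ ▸ hfar q hqQ
      · exact hsep q hqQ q' hqQ' hne
    have hcard := hmax _ (mem_filter.2 ⟨mem_univ _, hinsert⟩)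
    rw [card_insert_of_notMem hi] at hcard
    lia
  choose σ hσ hclose hfix using hrep
  exact ⟨Q, σ, fun i => u i - u (σ i), hσ, fun q hq => hfix q hq, fun i => by ring, hclose, hsep⟩

section Clusters

variable {ι : Type*} {T : ℕ} {Q : Finset ι} {σ : ι → ι} {t u ε : ι → ℤ}

theorem injOn_restrict_of_isClustered {U : Set (ι → ℤ)} (hcl : ∀ u ∈ U, IsClustered T Q σ t u) :
    Set.InjOn Q.restrict U := fun u hu v hv huv => funext fun i => by
  rw [(hcl u hu).eq_add, (hcl v hv).eq_add, add_left_inj]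
  exact congrFun huv ⟨σ i, (hcl u hu).mem i⟩

variable [Fintype ι]

section Weights

variable [DecidableEq ι]

/-- The sum of the coefficients `ε` over the indices represented by `q`: the coefficient with which
the coordinate at `q` of a clustered point `u` enters `∑ i, ε i * u i`. -/
def clusterWeight (ε : ι → ℤ) (σ : ι → ι) (q : ι) : ℤ :=
  ∑ i with σ i = q, ε i

theorem sum_clusterWeight (hσ : ∀ i, σ i ∈ Q) (ε : ι → ℤ) :
    ∑ q ∈ Q, clusterWeight ε σ q = ∑ i, ε i :=
  sum_fiberwise_of_maps_to (fun i _ => hσ i) ε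

theorem IsClustered.sum_mul_eq (hu : IsClustered T Q σ t u) (ε : ι → ℤ) :
    ∑ i, ε i * u i = ∑ q ∈ Q, clusterWeight ε σ q * u q + ∑ i, ε i * t i := by
  rw [sum_congr rfl fun i _ => by rw [hu.eq_add i, mul_add], sum_add_distrib,
    ← sum_fiberwise_of_maps_to fun i _ => hu.mem i]
  congr 1
  refine sum_congr rfl fun q _ => ?_
  rw [clusterWeight, sum_mul]
  exact sum_congr rfl fun i hi => by rw [(mem_filter.1 hi).2]

/-- A cluster of weight zero has at least two elements. -/
theorem exists_clusterWeight_ne_zero (hmem : ∀ i, σ i ∈ Q) (hfix : ∀ q ∈ Q, σ q = q)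
    (hε : ∀ i, ε i ≠ 0) (hQ : Fintype.card ι < 2 * #Q) :
    ∃ q ∈ Q, clusterWeight ε σ q ≠ 0 := by
  by_contra! hzero
  have htwo : ∀ q ∈ Q, 2 ≤ #{i | σ i = q} := fun q hq => by
    by_contra! hlt
    have hqq : q ∈ ({i | σ i = q} : Finset ι) := mem_filter.2 ⟨mem_univ q, hfix q hq⟩
    have hsingle : ({i | σ i = q} : Finset ι) = {q} :=
      eq_singleton_iff_unique_mem.2
        ⟨hqq, fun i hi => card_le_one.1 (Nat.lt_succ_iff.1 hlt) i hi q hqq⟩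
    have hweight := hzero q hq
    rw [clusterWeight, hsingle, sum_singleton] at hweight
    exact hε q hweight
  have hcard := card_eq_sum_card_fiberwise (s := univ) (t := Q) (f := σ) fun i _ => hmem i
  have hle := sum_le_sum htwo
  rw [sum_const, smul_eq_mul, ← hcard, card_univ] at hle
  lia

theorem IsClustered.abs_sub_le (hu : IsClustered T Q σ t u) (hε : ∀ i, |ε i| ≤ 1)
    (hε0 : ∑ i, ε i = 0) (hbal : ∑ i, ε i * u i = 0) {s s' : ι} (hs : s ∈ Q) (hs' : s' ∈ Q)
    (hzero : ∀ q ∈ Q, q ≠ s → q ≠ s' → clusterWeight ε σ q = 0)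
    (hne : ∃ q ∈ Q, clusterWeight ε σ q ≠ 0) :
    |u s - u s'| ≤ Fintype.card ι * T := by
  set w := clusterWeight ε σ
  have hw : ∑ q ∈ Q, w q = 0 := (sum_clusterWeight hu.mem ε).trans hε0
  have hws : w s ≠ 0 := fun h0 => by
    have hothers : ∀ q ∈ Q, q ≠ s' → w q = 0 := fun q hq hqs' =>
      (eq_or_ne q s).elim (fun hqs => hqs ▸ h0) fun hqs => hzero q hq hqs hqs'
    have hws' : w s' = 0 := (sum_eq_single_of_mem s' hs' hothers).symm.trans hw
    obtain ⟨q, hq, hwq⟩ := hne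
    exact hwq ((eq_or_ne q s').elim (fun hqs' => hqs' ▸ hws') (hothers q hq))
  have hshift : w s * (u s - u s') = -∑ i, ε i * t i := by
    calc w s * (u s - u s') = ∑ q ∈ Q, w q * (u q - u s') := by
          symm
          refine sum_eq_single_of_mem s hs fun q hq hqs => ?_
          rcases eq_or_ne q s' with rfl | hqs'
          · rw [sub_self, mul_zero]
          · rw [hzero q hq hqs hqs', zero_mul]
      _ = ∑ q ∈ Q, w q * u q := by
          simp only [mul_sub, sum_sub_distrib, ← sum_mul, hw, zero_mul, sub_zero]
      _ = -∑ i, ε i * t i := eq_neg_of_add_eq_zero_left ((hu.sum_mul_eq ε).symm.trans hbal)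
  calc |u s - u s'| ≤ |w s| * |u s - u s'| :=
        le_mul_of_one_le_left (abs_nonneg _) (Int.one_le_abs hws)
    _ = |∑ i, ε i * t i| := by rw [← abs_mul, hshift, abs_neg]
    _ ≤ ∑ i, |ε i * t i| := abs_sum_le_sum_abs _ _
    _ ≤ ∑ _i : ι, (T : ℤ) := sum_le_sum fun i _ => by
        rw [abs_mul]
        exact (mul_le_of_le_one_left (abs_nonneg _) (hε i)).trans (hu.abs_le i)
    _ = Fintype.card ι * T := by rw [sum_const, card_univ, nsmul_eq_mul]

end Weights

/-- A balance condition on more than `#ι / 2` clusters involves a coordinate effectively and thereby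
eliminates it. -/
theorem sum_comp_sub_add_le_of_isClustered {U : Finset (ι → ℤ)} {h : ℕ} {f : ℤ → ℝ} {K : ℝ}
    (hU : ∀ u ∈ U, ∀ i, u i ∈ Icc (0 : ℤ) h) (hf : ∀ δ, 0 ≤ f δ)
    (hK : ∀ Y : ℕ, ∑ δ ∈ Icc (-(Y : ℤ)) Y, f δ ≤ K * (Y + 1)) (hε : ∀ i, |ε i| = 1)
    (hε0 : ∑ i, ε i = 0) (hbal : ∀ u ∈ U, ∑ i, ε i * u i = 0)
    (hcl : ∀ u ∈ U, IsClustered T Q σ t u) (hQ : Fintype.card ι < 2 * #Q) {s s' : ι}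
    (hs : s ∈ Q) (hs' : s' ∈ Q) {τ : ℤ} (hτ : |τ| ≤ T) :
    ∑ u ∈ U, f (u s - u s' + τ)
      ≤ K * (((Fintype.card ι + 1) * T : ℕ) + 1) * ((h : ℝ) + 1) ^ (#Q - 1) := by
  classical
  rcases U.eq_empty_or_nonempty with rfl | ⟨u₀, hu₀⟩
  · have hK0 : 0 ≤ K := by simpa using (sum_nonneg fun δ _ => hf δ).trans (hK 0)
    rw [sum_empty]
    positivity
  have hinj {q : ι} (hq : q ∈ Q) (hwq : clusterWeight ε σ q ≠ 0) :
      Set.InjOn (Q.erase q).restrict (U : Set (ι → ℤ)) :=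
    injOn_restrict_erase_of_sum_mul_eq (injOn_restrict_of_isClustered hcl)
      (fun u hu => eq_neg_of_add_eq_zero_left (((hcl u hu).sum_mul_eq ε).symm.trans (hbal u hu)))
      hq hwq
  by_cases hthird : ∃ q ∈ Q, q ≠ s ∧ q ≠ s' ∧ clusterWeight ε σ q ≠ 0
  · obtain ⟨q, hq, hqs, hqs', hwq⟩ := hthird
    rw [← card_erase_of_mem hq]
    refine sum_comp_sub_add_le (fun u hu i _ => hU u hu i) (hinj hq hwq) hf hK
      (mem_erase.2 ⟨hqs.symm, hs⟩) (mem_erase.2 ⟨hqs'.symm, hs'⟩) (hτ.trans ?_)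
    exact_mod_cast Nat.le_mul_of_pos_left T (Nat.succ_pos _)
  · push Not at hthird
    have hne := exists_clusterWeight_ne_zero (hcl u₀ hu₀).mem (hcl u₀ hu₀).apply_of_mem
      (fun i => abs_ne_zero.1 ((hε i).trans_ne one_ne_zero)) hQ
    obtain ⟨q, hq, hwq⟩ := id hne
    rw [← card_erase_of_mem hq]
    refine sum_comp_le_of_abs_le (fun u hu i _ => hU u hu i) (hinj hq hwq) hf hK
      (g := fun u => u s - u s' + τ) fun u hu => ?_
    have hsub := (hcl u hu).abs_sub_le (fun i => (hε i).le) hε0 (hbal u hu) hs hs' hthird hne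
    calc |u s - u s' + τ| ≤ Fintype.card ι * T + T := (abs_add_le _ _).trans (add_le_add hsub hτ)
      _ = ((Fintype.card ι + 1) * T : ℕ) := by push_cast; ring

end Clusters

/-! ### Correlations of the von Mangoldt function -/

section Correlations

theorem sum_le_sum_sum_filter {α δ : Type*} {s : Finset α} {D : Finset δ} {P : δ → α → Prop}
    [∀ d, DecidablePred (P d)] {G : α → ℝ} (hG : ∀ x ∈ s, 0 ≤ G x)
    (hcover : ∀ x ∈ s, ∃ d ∈ D, P d x) : ∑ x ∈ s, G x ≤ ∑ d ∈ D, ∑ x ∈ s with P d x, G x := by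
  simp only [sum_filter]
  rw [sum_comm]
  refine sum_le_sum fun x hx => ?_
  obtain ⟨d, hd, hdx⟩ := hcover x hx
  calc G x = if P d x then G x else 0 := (if_pos hdx).symm
    _ ≤ _ := single_le_sum (f := fun d => if P d x then G x else 0)
      (fun d _ => ite_nonneg (hG x hx) le_rfl) hd

theorem prod_offDiag_le_sum_pow {α : Type*} {B : Finset α} (hB : B.Nonempty)
    {ρ : α × α → ℝ} (hρ : ∀ x, 1 ≤ ρ x) :
    ∏ x ∈ B.offDiag, ρ x ≤ ∑ x ∈ B ×ˢ B, ρ x ^ (#B * #B) := by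
  obtain ⟨y, hy, hmax⟩ := exists_max_image (B ×ˢ B) ρ (hB.product hB)
  have hρ0 : ∀ x, 0 ≤ ρ x := fun x => zero_le_one.trans (hρ x)
  have hsub : B.offDiag ⊆ B ×ˢ B := fun x hx =>
    mem_product.2 ((mem_offDiag.1 hx).imp_right And.left)
  calc ∏ x ∈ B.offDiag, ρ x ≤ ρ y ^ #B.offDiag :=
        (prod_le_prod (fun x _ => hρ0 x) fun x hx => hmax x (hsub hx)).trans_eq (prod_const _)
    _ ≤ ρ y ^ (#B * #B) :=
        pow_le_pow_right₀ (hρ y) ((card_le_card hsub).trans_eq (card_product B B))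
    _ ≤ _ := single_le_sum (f := fun x => ρ x ^ (#B * #B)) (fun x _ => pow_nonneg (hρ0 x) _) hy

variable {β : Type*}

theorem offDiagTotientRatio_image_pow_le {I : Finset β} (hI : I.Nonempty) {b : β → ℤ}
    (hb : Set.InjOn b I) (r : ℕ) :
    offDiagTotientRatio (I.image b) ^ r
      ≤ ∑ x ∈ I ×ˢ I, totientRatio (b x.1 - b x.2).natAbs ^ (r * (#I * #I)) := by
  rw [offDiagTotientRatio, ← prod_pow]
  refine (prod_offDiag_le_sum_pow (hI.image b)
    fun x => one_le_pow₀ (one_le_totientRatio _)).trans_eq ?_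
  simp only [card_image_of_injOn hb, ← pow_mul, sum_product, sum_image hb]

theorem vonMangoldt_toNat_le_mul {c X : ℝ} (hc : 1 ≤ c) (hX : 1 ≤ X) {n : ℤ}
    (hn : (n : ℝ) ≤ c * X) : Λ n.toNat ≤ c * (1 + Real.log X) := by
  have hlogX : 0 ≤ Real.log X := Real.log_nonneg hX
  rcases Nat.eq_zero_or_pos n.toNat with hzero | hpos
  · rw [hzero, ArithmeticFunction.map_zero]
    positivity
  have hcast : ((n.toNat : ℕ) : ℝ) = n := by
    exact_mod_cast Int.toNat_of_nonneg (Int.pos_iff_toNat_pos.2 hpos).le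
  calc Λ n.toNat ≤ Real.log n.toNat := vonMangoldt_le_log
    _ ≤ Real.log (c * X) := Real.log_le_log (by exact_mod_cast hpos) (hcast.trans_le hn)
    _ = Real.log c + Real.log X := Real.log_mul (by linarith) (by linarith)
    _ ≤ (c - 1) + c * Real.log X :=
        add_le_add (Real.log_le_sub_one_of_pos (by linarith)) (le_mul_of_one_le_left hlogX hc)
    _ ≤ c * (1 + Real.log X) := by linarith

variable [Fintype β]

theorem sum_prod_vonMangoldt_add_le {b : β → ℤ} {N : ℕ} {M : ℝ} (I : Finset β)
    (hM : ∀ m < N, ∀ x, Λ ((m : ℤ) + b x).toNat ≤ M) :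
    ∑ m ∈ range N, ∏ x, Λ ((m : ℤ) + b x).toNat
      ≤ #(primePowTranslates (I.image b) N) * M ^ Fintype.card β := by
  have hsupport : ∀ m ∈ range N, m ∉ primePowTranslates (I.image b) N →
      ∏ x, Λ ((m : ℤ) + b x).toNat = 0 := fun m hm hmP => by
    have hex : ∃ x ∈ I, ¬ IsPrimePow ((m : ℤ) + b x).toNat := by
      by_contra! hall
      exact hmP (mem_filter.2 ⟨hm, forall_mem_image.2 hall⟩)
    obtain ⟨x, -, hx⟩ := hex
    exact prod_eq_zero (mem_univ x) (vonMangoldt_eq_zero_iff.2 hx)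
  rw [← sum_subset (filter_subset _ _) hsupport, ← nsmul_eq_mul, ← card_univ]
  refine sum_le_card_nsmul _ _ _ fun m hm => ?_
  rw [← prod_const]
  exact prod_le_prod (fun x _ => vonMangoldt_nonneg) fun x _ =>
    hM m (mem_range.1 (mem_filter.1 hm).1) x

/-- Where no factor vanishes, the translate of `I.image b` consists of prime powers. -/
theorem exists_sum_prod_vonMangoldt_add_le {I : Finset β} (hI : I.Nonempty) {κ : ℝ}
    (hκ : 0 ≤ κ) :
    ∃ C : ℝ, 0 < C ∧ ∃ E : ℕ, ∀ X : ℝ, 2 ≤ X → ∀ b : β → ℤ, (∀ x, (b x : ℝ) ≤ κ * X) →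
      Set.InjOn b I →
      ∑ m ∈ range (⌊X⌋₊ + 1), ∏ x, Λ ((m : ℤ) + b x).toNat
        ≤ C * X * (1 + Real.log X) ^ (Fintype.card β - #I) *
          ∑ x ∈ I ×ˢ I, totientRatio (b x.1 - b x.2).natAbs ^ E := by
  obtain ⟨C, hC, hsieve⟩ := exists_card_primePowTranslates_mul_log_pow_le #I hκ
  refine ⟨(1 + κ) ^ Fintype.card β * C, by positivity, #I * (#I * #I),
    fun X hX b hbX hb => ?_⟩
  set L := 1 + Real.log X
  have hL : 1 ≤ L := le_add_of_nonneg_right (Real.log_nonneg (by linarith))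
  have hM : ∀ m < ⌊X⌋₊ + 1, ∀ x, Λ ((m : ℤ) + b x).toNat ≤ (1 + κ) * L := fun m hm x => by
    refine vonMangoldt_toNat_le_mul (by linarith) (by linarith) ?_
    push_cast
    linarith [hbX x, (Nat.le_floor_iff (by linarith : 0 ≤ X)).1 (Nat.lt_succ_iff.1 hm)]
  have hcount := hsieve (I.image b) (card_image_of_injOn hb) X hX
    (forall_mem_image.2 fun x _ => hbX x)
  refine (sum_prod_vonMangoldt_add_le I hM).trans
    (le_of_mul_le_mul_right ?_ (by positivity : 0 < L ^ #I))
  set P := primePowTranslates (I.image b) (⌊X⌋₊ + 1)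
  calc #P * ((1 + κ) * L) ^ Fintype.card β * L ^ #I
      = ((1 + κ) * L) ^ Fintype.card β * (#P * L ^ #I) := by ring
    _ ≤ ((1 + κ) * L) ^ Fintype.card β * (C * X *
          ∑ x ∈ I ×ˢ I, totientRatio (b x.1 - b x.2).natAbs ^ (#I * (#I * #I))) := by
        refine mul_le_mul_of_nonneg_left (hcount.trans ?_) (by positivity)
        gcongr
        exact offDiagTotientRatio_image_pow_le hI hb #I
    _ = _ := by
        rw [mul_pow, ← pow_sub_mul_pow L (card_le_univ I)]
        ring

end Correlations

section Majorant

/-- The three-term bound `H^(2k-1) + H^k M^k + H M^(2k-1)` for a `2k`-th moment over intervals of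
length `H`, where `M` bounds the coefficients. -/
def momentMajorant (k : ℕ) (H M : ℝ) : ℝ :=
  H ^ (2 * k - 1) + H ^ k * M ^ k + H * M ^ (2 * k - 1)

variable {k c : ℕ} {H M : ℝ}

theorem momentMajorant_nonneg (hH : 0 ≤ H) (hM : 0 ≤ M) : 0 ≤ momentMajorant k H M := by
  unfold momentMajorant
  positivity

theorem pow_mul_pow_le_momentMajorant (hH : 0 ≤ H) (hM : 0 ≤ M) (hc : 1 ≤ c) (hck : c ≤ k) :
    H ^ c * M ^ (2 * k - c) ≤ momentMajorant k H M := by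
  have h₁ : 0 ≤ H ^ (2 * k - 1) := by positivity
  have h₂ : 0 ≤ H ^ k * M ^ k := by positivity
  have h₃ : 0 ≤ H * M ^ (2 * k - 1) := by positivity
  rw [momentMajorant]
  rcases le_total H M with hHM | hMH
  · calc H ^ c * M ^ (2 * k - c) = H * (H ^ (c - 1) * M ^ (2 * k - c)) := by
          rw [← mul_assoc, mul_pow_sub_one (by lia)]
      _ ≤ H * (M ^ (c - 1) * M ^ (2 * k - c)) := by gcongr
      _ = H * M ^ (2 * k - 1) := by rw [← pow_add]; congr 2; lia
      _ ≤ _ := by linarith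
  · calc H ^ c * M ^ (2 * k - c) = H ^ c * (M ^ (k - c) * M ^ k) := by
          rw [← pow_add]; congr 2; lia
      _ ≤ H ^ c * (H ^ (k - c) * M ^ k) := by gcongr
      _ = H ^ k * M ^ k := by rw [← mul_assoc, pow_mul_pow_sub H hck]
      _ ≤ _ := by linarith

theorem pow_sub_one_mul_pow_le_momentMajorant (hH : 0 ≤ H) (hM : 1 ≤ M) (hkc : k < c)
    (hck : c ≤ 2 * k) : H ^ (c - 1) * M ^ (2 * k - c) ≤ momentMajorant k H M := by
  have h₁ : 0 ≤ H ^ (2 * k - 1) := by positivity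
  have h₂ : 0 ≤ H ^ k * M ^ k := by positivity
  have h₃ : 0 ≤ H * M ^ (2 * k - 1) := by positivity
  rw [momentMajorant]
  rcases le_total H M with hHM | hMH
  · calc H ^ (c - 1) * M ^ (2 * k - c) = H ^ k * (H ^ (c - 1 - k) * M ^ (2 * k - c)) := by
          rw [← mul_assoc, ← pow_add]; congr 2; lia
      _ ≤ H ^ k * (M ^ (c - 1 - k) * M ^ (2 * k - c)) := by gcongr
      _ = H ^ k * M ^ (k - 1) := by rw [← pow_add]; congr 2; lia
      _ ≤ H ^ k * M ^ k := by gcongr; lia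
      _ ≤ _ := by linarith
  · calc H ^ (c - 1) * M ^ (2 * k - c) ≤ H ^ (c - 1) * H ^ (2 * k - c) := by gcongr
      _ = H ^ (2 * k - 1) := by rw [← pow_add]; congr 1; lia
      _ ≤ _ := by linarith

theorem momentMajorant_mono {H' M' : ℝ} (hH : 0 ≤ H) (hM : 0 ≤ M) (hHH' : H ≤ H')
    (hMM' : M ≤ M') : momentMajorant k H M ≤ momentMajorant k H' M' := by
  have hH' : 0 ≤ H' := hH.trans hHH'
  unfold momentMajorant
  gcongr

theorem momentMajorant_mul_le {c : ℝ} (hk : 1 ≤ k) (hc : 1 ≤ c) (hH : 0 ≤ H) :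
    momentMajorant k (c * H) (c * M) ≤ c ^ (2 * k) * momentMajorant k H M := by
  have hmiddle : c ^ (2 * k) = c ^ k * c ^ k := by rw [two_mul, pow_add]
  have hlast : c ^ (2 * k) = c * c ^ (2 * k - 1) := (mul_pow_sub_one (by lia) c).symm
  calc momentMajorant k (c * H) (c * M)
      = c ^ (2 * k - 1) * H ^ (2 * k - 1) + c ^ (2 * k) * (H ^ k * M ^ k)
          + c ^ (2 * k) * (H * M ^ (2 * k - 1)) := by
        nth_rewrite 1 [hmiddle]
        rw [hlast]
        simp only [momentMajorant, mul_pow, mul_mul_mul_comm]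
    _ ≤ c ^ (2 * k) * H ^ (2 * k - 1) + c ^ (2 * k) * (H ^ k * M ^ k)
          + c ^ (2 * k) * (H * M ^ (2 * k - 1)) := by
        gcongr
        exact Nat.sub_le _ _
    _ = c ^ (2 * k) * momentMajorant k H M := by rw [momentMajorant]; ring

theorem momentMajorant_le_of_pow_le (hk : 1 ≤ k) (hH : 1 ≤ H) (hM : 0 ≤ M)
    (hMH : M ^ k ≤ H ^ (k - 1)) : momentMajorant k H M ≤ 3 * H ^ (2 * k - 1) := by
  have hmiddle : H ^ k * M ^ k ≤ H ^ (2 * k - 1) := by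
    calc H ^ k * M ^ k ≤ H ^ k * H ^ (k - 1) := by gcongr
      _ = H ^ (2 * k - 1) := by rw [← pow_add]; congr 1; lia
  have hpow : M ^ (2 * k - 1) ≤ H ^ (2 * k - 2) := by
    rcases le_total M 1 with hM1 | hM1
    · exact (pow_le_one₀ hM hM1).trans (one_le_pow₀ hH)
    · calc M ^ (2 * k - 1) ≤ M ^ (k * 2) := pow_le_pow_right₀ hM1 (by lia)
        _ = (M ^ k) ^ 2 := pow_mul _ _ _
        _ ≤ (H ^ (k - 1)) ^ 2 := by gcongr
        _ = H ^ (2 * k - 2) := by rw [← pow_mul]; congr 1; lia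
  have hlast : H * M ^ (2 * k - 1) ≤ H ^ (2 * k - 1) := by
    calc H * M ^ (2 * k - 1) ≤ H * H ^ (2 * k - 2) := by gcongr
      _ = H ^ (2 * k - 1) := by rw [← pow_succ']; congr 1; lia
  rw [momentMajorant]
  linarith

theorem pow_pow_le_of_rpow_le {y : ℝ} {ℓ : ℕ} (hk : 2 ≤ k) (hy : 0 ≤ y)
    (hyH : y ^ ((ℓ : ℝ) * k / ((k : ℝ) - 1)) ≤ H) : (y ^ ℓ) ^ k ≤ H ^ (k - 1) := by
  have hk1 : (k : ℝ) - 1 ≠ 0 := sub_ne_zero.2 (by exact_mod_cast (by lia : k ≠ 1))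
  calc (y ^ ℓ) ^ k = (y ^ ((ℓ : ℝ) * k / ((k : ℝ) - 1))) ^ (k - 1) := by
        rw [← Real.rpow_mul_natCast hy, Nat.cast_sub (by lia), Nat.cast_one, div_mul_cancel₀ _ hk1,
          ← Nat.cast_mul, Real.rpow_natCast, pow_mul]
    _ ≤ H ^ (k - 1) := by gcongr

end Majorant

section Tuples

variable {ι J : Type*} [Fintype J] {a : J → ℤ}

/-- The product `∏ j, Λ(n + a j)`, which detects the `n` for which all `n + a j` are prime
powers. -/
noncomputable def vonMangoldtTuple (a : J → ℤ) (n : ℤ) : ℝ :=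
  ∏ j, Λ (n + a j).toNat

theorem vonMangoldtTuple_nonneg (a : J → ℤ) (n : ℤ) : 0 ≤ vonMangoldtTuple a n :=
  prod_nonneg fun _ _ => vonMangoldt_nonneg

theorem injOn_add_of_lt_abs_sub (ha : Function.Injective a) {T : ℕ}
    (hT : ∀ j j', |a j - a j'| ≤ T) {Q : Finset ι} {u : ι → ℤ}
    (hu : ∀ q ∈ Q, ∀ q' ∈ Q, q ≠ q' → (T : ℤ) < |u q - u q'|) :
    Set.InjOn (fun x : ι × J => u x.1 + a x.2) (Q ×ˢ (univ : Finset J) : Finset (ι × J)) := by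
  rintro ⟨q, j⟩ hq ⟨q', j'⟩ hq' (heq : u q + a j = u q' + a j')
  obtain rfl : q = q' := by
    by_contra hne
    have hlt := hu q (mem_product.1 hq).1 q' (mem_product.1 hq').1 hne
    rw [show u q - u q' = a j' - a j by linarith] at hlt
    exact hlt.not_ge (hT j' j)
  rw [ha (add_left_cancel heq)]

variable [Fintype ι]

theorem exists_sum_sum_prod_vonMangoldtTuple_le [Nonempty J] (ha : Function.Injective a) {T : ℕ}
    (hT : ∀ j j', |a j - a j'| ≤ T) {κ : ℝ} (hκ : 0 ≤ κ) {Q : Finset ι} (hQ : Q.Nonempty) :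
    ∃ C : ℝ, 0 < C ∧ ∃ E : ℕ, ∀ X : ℝ, 2 ≤ X → ∀ U : Finset (ι → ℤ),
      (∀ u ∈ U, ∀ i j, ((u i + a j : ℤ) : ℝ) ≤ κ * X) →
      (∀ u ∈ U, ∀ q ∈ Q, ∀ q' ∈ Q, q ≠ q' → (T : ℤ) < |u q - u q'|) → ∀ S : ℝ,
      (∀ s ∈ Q, ∀ s' ∈ Q, ∀ τ : ℤ, |τ| ≤ T →
        (∑ u ∈ U, totientRatio (u s - u s' + τ).natAbs ^ E) *
          ((1 + Real.log X) ^ Fintype.card J) ^ (Fintype.card ι - #Q) ≤ S) →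
      ∑ u ∈ U, ∑ m ∈ range (⌊X⌋₊ + 1), ∏ i, vonMangoldtTuple a (m + u i) ≤ C * (X * S) := by
  set I := Q ×ˢ (univ : Finset J)
  have hI : I.Nonempty := hQ.product univ_nonempty
  obtain ⟨C, hC, E, hcorr⟩ := exists_sum_prod_vonMangoldt_add_le hI hκ
  refine ⟨C * (#I * #I), by positivity, E, fun X hX U hUX hsep S hS => ?_⟩
  set M := (1 + Real.log X) ^ Fintype.card J
  have hexp : Fintype.card (ι × J) - #I = Fintype.card J * (Fintype.card ι - #Q) := by
    rw [Fintype.card_prod, card_product, card_univ, ← Nat.sub_mul, mul_comm]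
  have hpoint : ∀ u ∈ U, ∑ m ∈ range (⌊X⌋₊ + 1), ∏ i, vonMangoldtTuple a (m + u i)
      ≤ C * X * M ^ (Fintype.card ι - #Q) * ∑ x ∈ I ×ˢ I,
        totientRatio (u x.1.1 - u x.2.1 + (a x.1.2 - a x.2.2)).natAbs ^ E := fun u hu => by
    have hbound := hcorr X hX (fun x => u x.1 + a x.2) (fun x => hUX u hu x.1 x.2)
      (injOn_add_of_lt_abs_sub ha hT (hsep u hu))
    simpa only [vonMangoldtTuple, Fintype.prod_prod_type, ← add_assoc, add_sub_add_comm, hexp,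
      pow_mul] using hbound
  calc _ ≤ _ := sum_le_sum hpoint
    _ = C * X * ∑ x ∈ I ×ˢ I, (∑ u ∈ U,
          totientRatio (u x.1.1 - u x.2.1 + (a x.1.2 - a x.2.2)).natAbs ^ E) *
            M ^ (Fintype.card ι - #Q) := by
        rw [← mul_sum, sum_comm, ← sum_mul]
        ring
    _ ≤ C * X * ∑ _x ∈ I ×ˢ I, S := by
        gcongr with x hx
        obtain ⟨hx₁, hx₂⟩ := mem_product.1 hx
        exact hS _ (mem_product.1 hx₁).1 _ (mem_product.1 hx₂).1 _ (hT _ _)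
    _ = _ := by
        rw [sum_const, card_product, nsmul_eq_mul]
        push_cast
        ring

variable {A T k h : ℕ} {ε : ι → ℤ} {Q : Finset ι} {U : Finset (ι → ℤ)}

theorem sum_comp_sub_add_mul_pow_le_momentMajorant {f : ℤ → ℝ} {K M : ℝ}
    (hU : ∀ u ∈ U, ∀ i, u i ∈ Icc (0 : ℤ) h) (hf : ∀ δ, 0 ≤ f δ)
    (hK : ∀ Y : ℕ, ∑ δ ∈ Icc (-(Y : ℤ)) Y, f δ ≤ K * (Y + 1)) (hε : ∀ i, |ε i| = 1)
    (hε0 : ∑ i, ε i = 0) (hbal : ∀ u ∈ U, ∑ i, ε i * u i = 0) {σ : ι → ι} {t : ι → ℤ}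
    (hcl : ∀ u ∈ U, IsClustered T Q σ t u) (hk : Fintype.card ι = 2 * k) (hM : 1 ≤ M) {s s' : ι}
    (hs : s ∈ Q) (hs' : s' ∈ Q) {τ : ℤ} (hτ : |τ| ≤ T) :
    (∑ u ∈ U, f (u s - u s' + τ)) * M ^ (Fintype.card ι - #Q)
      ≤ K * (((Fintype.card ι + 1) * T : ℕ) + 1) * momentMajorant k (h + 1) M := by
  have hK0 : 0 ≤ K := by simpa using (sum_nonneg fun δ _ => hf δ).trans (hK 0)
  obtain ⟨e, hsum, he⟩ : ∃ e : ℕ,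
      ∑ u ∈ U, f (u s - u s' + τ) ≤ K * (((Fintype.card ι + 1) * T : ℕ) + 1) * ((h : ℝ) + 1) ^ e ∧
      ((h : ℝ) + 1) ^ e * M ^ (2 * k - #Q) ≤ momentMajorant k (h + 1) M := by
    rcases le_or_gt #Q k with hQk | hkQ
    · refine ⟨#Q, sum_comp_sub_add_le (fun u hu i _ => hU u hu i)
        (injOn_restrict_of_isClustered hcl) hf hK hs hs' (hτ.trans ?_),
        pow_mul_pow_le_momentMajorant (by positivity) (by positivity) (card_pos.2 ⟨s, hs⟩) hQk⟩
      exact_mod_cast Nat.le_mul_of_pos_left _ (Nat.succ_pos _)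
    · exact ⟨#Q - 1, sum_comp_sub_add_le_of_isClustered hU hf hK hε hε0 hbal hcl (by lia) hs hs' hτ,
        pow_sub_one_mul_pow_le_momentMajorant (by positivity) hM hkQ (hk ▸ card_le_univ Q)⟩
  rw [hk] at hsum ⊢
  calc _ ≤ K * (((2 * k + 1) * T : ℕ) + 1) * ((h : ℝ) + 1) ^ e * M ^ (2 * k - #Q) :=
        mul_le_mul_of_nonneg_right hsum (by positivity)
    _ ≤ _ := by
        rw [mul_assoc]
        exact mul_le_mul_of_nonneg_left he (by positivity)

theorem exists_sum_clustered_prod_vonMangoldtTuple_le [Nonempty J] (ha : Function.Injective a)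
    (hA : ∀ j, |a j| ≤ A) (hε : ∀ i, |ε i| = 1) (hε0 : ∑ i, ε i = 0)
    (hk : Fintype.card ι = 2 * k) (hQ : Q.Nonempty) :
    ∃ C : ℝ, 0 < C ∧ ∀ X : ℝ, 2 ≤ X → ∀ h : ℕ, (h : ℝ) ≤ 2 * X → ∀ U : Finset (ι → ℤ),
      (∀ u ∈ U, ∀ i, u i ∈ Icc (0 : ℤ) h) → (∀ u ∈ U, ∑ i, ε i * u i = 0) →
      ∀ σ t, (∀ u ∈ U, IsClustered (2 * A) Q σ t u) →
      ∑ u ∈ U, ∑ m ∈ range (⌊X⌋₊ + 1), ∏ i, vonMangoldtTuple a (m + u i)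
        ≤ C * (X * momentMajorant k (h + 1) ((1 + Real.log X) ^ Fintype.card J)) := by
  have hT : ∀ j j', |a j - a j'| ≤ (2 * A : ℕ) := fun j j' =>
    (abs_sub _ _).trans (by push_cast; linarith [hA j, hA j'])
  obtain ⟨C, hC, E, hcorr⟩ := exists_sum_sum_prod_vonMangoldtTuple_le ha hT
    (by positivity : (0 : ℝ) ≤ 2 + A) hQ
  obtain ⟨K, hK, hratio⟩ := exists_sum_Icc_totientRatio_natAbs_pow_le E
  set W : ℝ := K * (((Fintype.card ι + 1) * (2 * A) : ℕ) + 1)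
  refine ⟨C * W, by positivity, fun X hX h hhX U hU hbal σ t hcl => ?_⟩
  have hUX : ∀ u ∈ U, ∀ i j, ((u i + a j : ℤ) : ℝ) ≤ (2 + A) * X := fun u hu i j => by
    have hle : u i + a j ≤ h + A :=
      add_le_add (mem_Icc.1 (hU u hu i)).2 ((le_abs_self _).trans (hA j))
    calc ((u i + a j : ℤ) : ℝ) ≤ h + A := by exact_mod_cast hle
      _ ≤ 2 * X + A * X :=
        add_le_add hhX (le_mul_of_one_le_right A.cast_nonneg (by linarith))
      _ = (2 + A) * X := by ring
  have hf : ∀ δ : ℤ, 0 ≤ totientRatio δ.natAbs ^ E := fun δ =>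
    pow_nonneg (zero_le_one.trans (one_le_totientRatio _)) _
  have hM : 1 ≤ (1 + Real.log X) ^ Fintype.card J :=
    one_le_pow₀ (le_add_of_nonneg_right (Real.log_nonneg (by linarith)))
  refine (hcorr X hX U hUX (fun u hu => (hcl u hu).lt_abs_sub) (W * momentMajorant k (h + 1) _)
    fun s hs s' hs' τ hτ => sum_comp_sub_add_mul_pow_le_momentMajorant hU hf hratio hε hε0 hbal
      hcl hk hM hs hs' hτ).trans_eq ?_
  ring

/-- There are finitely many cluster patterns `(Q, σ, t)`. -/
theorem exists_sum_balanced_prod_vonMangoldtTuple_le [DecidableEq ι] [Nonempty ι] [Nonempty J]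
    (ha : Function.Injective a) (hε : ∀ i, |ε i| = 1) (hε0 : ∑ i, ε i = 0)
    (hk : Fintype.card ι = 2 * k) :
    ∃ C : ℝ, 0 < C ∧ ∀ X : ℝ, 2 ≤ X → ∀ h : ℕ, (h : ℝ) ≤ 2 * X →
      ∑ u ∈ Fintype.piFinset (fun _ : ι => Icc (0 : ℤ) h) with ∑ i, ε i * u i = 0,
        ∑ m ∈ range (⌊X⌋₊ + 1), ∏ i, vonMangoldtTuple a (m + u i)
        ≤ C * (X * momentMajorant k (h + 1) ((1 + Real.log X) ^ Fintype.card J)) := by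
  classical
  obtain ⟨A, hA⟩ : ∃ A : ℕ, ∀ j, |a j| ≤ A := by
    refine ⟨∑ j, (a j).natAbs, fun j => ?_⟩
    rw [Int.abs_eq_natAbs]
    exact_mod_cast single_le_sum (f := fun j => (a j).natAbs) (fun _ _ => Nat.zero_le _)
      (mem_univ j)
  have hpattern (Q : {Q : Finset ι // Q.Nonempty}) :=
    exists_sum_clustered_prod_vonMangoldtTuple_le ha hA hε hε0 hk Q.2
  choose C hC hbound using hpattern
  set D : Finset ({Q : Finset ι // Q.Nonempty} × (ι → ι) × (ι → ℤ)) :=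
    univ ×ˢ univ ×ˢ Fintype.piFinset fun _ => Icc (-((2 * A : ℕ) : ℤ)) (2 * A : ℕ)
  have hcover : ∀ u, ∃ d ∈ D, IsClustered (2 * A) d.1 d.2.1 d.2.2 u := fun u => by
    obtain ⟨Q, σ, t, hcl⟩ := exists_isClustered (2 * A) u
    refine ⟨(⟨Q, σ (Classical.arbitrary ι), hcl.mem _⟩, σ, t), ?_, hcl⟩
    simp only [D, mem_product, mem_univ, true_and, Fintype.mem_piFinset, mem_Icc]
    exact fun i => abs_le.1 (hcl.abs_le i)
  have hCD : 0 ≤ ∑ d ∈ D, C d.1 := sum_nonneg fun d _ => (hC d.1).le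
  refine ⟨(∑ d ∈ D, C d.1) + 1, by positivity, fun X hX h hhX => ?_⟩
  set U := {u ∈ Fintype.piFinset (fun _ : ι => Icc (0 : ℤ) h) | ∑ i, ε i * u i = 0}
  set bound := X * momentMajorant k (h + 1) ((1 + Real.log X) ^ Fintype.card J)
  have hbound0 : 0 ≤ bound := mul_nonneg (by linarith) (momentMajorant_nonneg (by positivity)
    (pow_nonneg (add_nonneg zero_le_one (Real.log_nonneg (by linarith))) _))
  calc _ ≤ ∑ d ∈ D, ∑ u ∈ U with IsClustered (2 * A) d.1 d.2.1 d.2.2 u,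
          ∑ m ∈ range (⌊X⌋₊ + 1), ∏ i, vonMangoldtTuple a (m + u i) :=
        sum_le_sum_sum_filter (fun u _ => sum_nonneg fun m _ => prod_nonneg fun i _ =>
          vonMangoldtTuple_nonneg a _) fun u _ => hcover u
    _ ≤ ∑ d ∈ D, C d.1 * bound := sum_le_sum fun d _ => hbound d.1 X hX h hhX _
        (fun u hu => Fintype.mem_piFinset.1 (mem_filter.1 (mem_filter.1 hu).1).1)
        (fun u hu => (mem_filter.1 (mem_filter.1 hu).1).2) _ _ fun u hu => (mem_filter.1 hu).2
    _ ≤ _ := by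
        rw [← sum_mul]
        gcongr
        linarith

end Tuples

/-! ### Even moments of exponential sums -/

section ExponentialSums

theorem eTwoPi_sum {ι : Type*} (s : Finset ι) (f : ι → ℝ) :
    eTwoPi (∑ i ∈ s, f i) = ∏ i ∈ s, eTwoPi (f i) := by
  simp only [eTwoPi]
  rw [← Complex.exp_sum, Complex.ofReal_sum, mul_sum]

theorem conj_eTwoPi (θ : ℝ) : (starRingEnd ℂ) (eTwoPi θ) = eTwoPi (-θ) := by
  simp [eTwoPi, ← Complex.exp_conj, map_ofNat]

theorem continuous_eTwoPi : Continuous eTwoPi := by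
  unfold eTwoPi
  fun_prop

theorem eTwoPi_intCast (n : ℤ) : eTwoPi n = 1 :=
  Complex.exp_eq_one_iff.2 ⟨n, by push_cast; ring⟩

theorem integral_eTwoPi_mul_intCast (n : ℤ) :
    ∫ α in (0 : ℝ)..1, eTwoPi (α * n) = if n = 0 then 1 else 0 := by
  split_ifs with hn
  · simp [hn, eTwoPi]
  have hc : 2 * (Real.pi : ℂ) * Complex.I * n ≠ 0 := by simp [Real.pi_ne_zero, hn]
  have hlinear : ∀ α : ℝ, eTwoPi (α * n) = Complex.exp (2 * Real.pi * Complex.I * n * α) :=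
    fun α => by rw [eTwoPi]; congr 1; push_cast; ring
  have hend := hlinear 1
  rw [one_mul, eTwoPi_intCast] at hend
  simp only [hlinear, integral_exp_mul_complex hc, ← hend, Complex.ofReal_zero, mul_zero,
    Complex.exp_zero, sub_self, zero_div]

/-- The signs with which the frequencies enter the expansion of `‖S‖^(2k) = S^k * (conj S)^k`. -/
def momentSign (k : ℕ) : Fin k ⊕ Fin k → ℤ :=
  Sum.elim (fun _ => 1) fun _ => -1

theorem abs_momentSign {k : ℕ} (i : Fin k ⊕ Fin k) : |momentSign k i| = 1 := by
  rcases i with i | i <;> simp [momentSign]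

theorem sum_momentSign (k : ℕ) : ∑ i, momentSign k i = 0 := by
  simp [momentSign]

variable {β : Type*}

/-- The `2k`-tuples in `S` whose frequencies under `φ` satisfy
`φ(v₁) + ⋯ + φ(v_k) = φ(v_{k+1}) + ⋯ + φ(v_{2k})`. -/
def balancedTuples (k : ℕ) (S : Finset β) (φ : β → ℤ) : Finset (Fin k ⊕ Fin k → β) :=
  {v ∈ Fintype.piFinset fun _ => S | ∑ i, momentSign k i * φ (v i) = 0}

theorem balancedTuples_mono {S S' : Finset β} (hS : S ⊆ S') (k : ℕ) (φ : β → ℤ) :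
    balancedTuples k S φ ⊆ balancedTuples k S' φ :=
  filter_subset_filter _ (Fintype.piFinset_subset _ _ fun _ => hS)

theorem ofReal_norm_sum_pow_eq (k : ℕ) (S : Finset β) (φ : β → ℤ) (c : β → ℂ) (α : ℝ) :
    ((‖∑ b ∈ S, c b * eTwoPi (α * φ b)‖ ^ (2 * k) : ℝ) : ℂ)
      = ∑ v ∈ Fintype.piFinset (fun _ : Fin k ⊕ Fin k => S),
          (∏ i, c (v (Sum.inl i))) * (∏ i, (starRingEnd ℂ) (c (v (Sum.inr i)))) *
            eTwoPi (α * ((∑ i, momentSign k i * φ (v i) : ℤ) : ℝ)) := by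
  set d : Fin k ⊕ Fin k → β → ℂ := Sum.elim (fun _ => c) fun _ b => (starRingEnd ℂ) (c b)
  set z := ∑ b ∈ S, c b * eTwoPi (α * φ b)
  have hconj : (starRingEnd ℂ) z = ∑ b ∈ S, (starRingEnd ℂ) (c b) * eTwoPi (-(α * φ b)) := by
    simp only [z, map_sum, map_mul, conj_eTwoPi]
  calc ((‖z‖ ^ (2 * k) : ℝ) : ℂ) = z ^ k * (starRingEnd ℂ) z ^ k := by
        rw [← mul_pow, Complex.mul_conj', ← pow_mul, Complex.ofReal_pow]
    _ = ∏ i, ∑ b ∈ S, d i b * eTwoPi (momentSign k i * (α * φ b)) := by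
        rw [Fintype.prod_sum_type, hconj]
        simp only [d, z, momentSign, Sum.elim_inl, Sum.elim_inr, prod_const, card_univ,
          Fintype.card_fin, Int.cast_one, one_mul, Int.cast_neg, neg_mul]
    _ = _ := by
        rw [prod_univ_sum]
        refine sum_congr rfl fun v _ => ?_
        rw [prod_mul_distrib, ← eTwoPi_sum, Fintype.prod_sum_type]
        congr 2
        push_cast
        rw [mul_sum]
        exact sum_congr rfl fun i _ => mul_left_comm _ _ _

theorem ofReal_integral_norm_sum_pow_eq (k : ℕ) (S : Finset β) (φ : β → ℤ) (c : β → ℂ) :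
    ((∫ α in (0 : ℝ)..1, ‖∑ b ∈ S, c b * eTwoPi (α * φ b)‖ ^ (2 * k) : ℝ) : ℂ)
      = ∑ v ∈ balancedTuples k S φ,
          (∏ i, c (v (Sum.inl i))) * ∏ i, (starRingEnd ℂ) (c (v (Sum.inr i))) := by
  rw [← intervalIntegral.integral_ofReal,
    intervalIntegral.integral_congr fun α _ => ofReal_norm_sum_pow_eq k S φ c α,
    intervalIntegral.integral_finsetSum, balancedTuples, sum_filter]
  · refine sum_congr rfl fun v _ => ?_
    rw [intervalIntegral.integral_const_mul, integral_eTwoPi_mul_intCast, mul_ite, mul_one,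
      mul_zero]
  · exact fun v _ => (continuous_const.mul
      (continuous_eTwoPi.comp (continuous_mul_const _))).intervalIntegrable _ _

theorem integral_norm_sum_pow_le (k : ℕ) (S : Finset β) (φ : β → ℤ) (c : β → ℂ) :
    ∫ α in (0 : ℝ)..1, ‖∑ b ∈ S, c b * eTwoPi (α * φ b)‖ ^ (2 * k)
      ≤ ∑ v ∈ balancedTuples k S φ, ∏ i, ‖c (v i)‖ := by
  refine (le_abs_self _).trans ?_
  rw [← Real.norm_eq_abs, ← Complex.norm_real, ofReal_integral_norm_sum_pow_eq]
  refine (norm_sum_le _ _).trans_eq (sum_congr rfl fun v _ => ?_)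
  simp only [norm_mul, norm_prod, RCLike.norm_conj, Fintype.prod_sum_type]

theorem sum_balancedTuples_Icc_add (k m h : ℕ) (f : ℤ → ℝ) :
    ∑ v ∈ balancedTuples k (Icc m (m + h)) (fun n => (n : ℤ)), ∏ i, f (v i)
      = ∑ u ∈ balancedTuples k (Icc (0 : ℤ) h) id, ∏ i, f (m + u i) := by
  have hshift : ∀ u : Fin k ⊕ Fin k → ℤ,
      ∑ i, momentSign k i * ((m : ℤ) + u i) = ∑ i, momentSign k i * u i := fun u => by
    simp only [mul_add, sum_add_distrib, ← sum_mul, sum_momentSign, zero_mul, zero_add]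
  refine sum_nbij' (fun v i => (v i : ℤ) - m) (fun u i => ((m : ℤ) + u i).toNat) ?_ ?_ ?_ ?_ ?_
  · intro v hv
    simp only [balancedTuples, mem_filter, Fintype.mem_piFinset, mem_Icc, id] at hv ⊢
    refine ⟨fun i => by have := hv.1 i; lia, ?_⟩
    rw [← hshift]
    simpa only [add_sub_cancel] using hv.2
  · intro u hu
    simp only [balancedTuples, mem_filter, Fintype.mem_piFinset, mem_Icc, id] at hu ⊢
    refine ⟨fun i => by have := hu.1 i; lia, ?_⟩
    rw [← hu.2, ← hshift u]
    exact sum_congr rfl fun i _ => by rw [Int.toNat_of_nonneg (by have := hu.1 i; lia)]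
  · intro v _
    simp
  · intro u hu
    simp only [balancedTuples, mem_filter, Fintype.mem_piFinset, mem_Icc] at hu
    funext i
    have := hu.1 i
    lia
  · intro v _
    simp

end ExponentialSums

section StepFunctions

theorem integrable_indicator_Ico (m : ℕ) (c : ℝ) :
    MeasureTheory.Integrable ((Set.Ico (m : ℝ) (m + 1)).indicator fun _ => c) :=
  (MeasureTheory.integrable_indicator_iff measurableSet_Ico).2
    (MeasureTheory.integrableOn_const measure_Ico_lt_top.ne)

theorem integral_indicator_Ico (m : ℕ) (c : ℝ) :
    ∫ x, (Set.Ico (m : ℝ) (m + 1)).indicator (fun _ => c) x = c := by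
  rw [MeasureTheory.integral_indicator measurableSet_Ico, MeasureTheory.setIntegral_const]
  simp

theorem integral_le_sum_floor {f : ℝ → ℝ} {G : ℕ → ℝ} {X : ℝ} (hX : 0 ≤ X) (hf : ∀ x, 0 ≤ f x)
    (hG : ∀ m, 0 ≤ G m) (hfG : ∀ x, 0 ≤ x → f x ≤ G ⌊x⌋₊) :
    ∫ x in (0 : ℝ)..X, f x ≤ ∑ m ∈ range (⌊X⌋₊ + 1), G m := by
  set step : ℕ → ℝ → ℝ := fun m => (Set.Ico (m : ℝ) (m + 1)).indicator fun _ => G m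
  have hstep0 : ∀ m x, 0 ≤ step m x := fun m => Set.indicator_nonneg fun _ _ => hG m
  have hinteg : MeasureTheory.Integrable fun x => ∑ m ∈ range (⌊X⌋₊ + 1), step m x :=
    MeasureTheory.integrable_finsetSum _ fun m _ => integrable_indicator_Ico m (G m)
  have hle : ∀ x, 0 ≤ x → x ≤ X → f x ≤ ∑ m ∈ range (⌊X⌋₊ + 1), step m x := by
    intro x hx hxX
    calc f x ≤ G ⌊x⌋₊ := hfG x hx
      _ = step ⌊x⌋₊ x :=
        (Set.indicator_of_mem (show x ∈ Set.Ico _ _ from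
          ⟨Nat.floor_le hx, Nat.lt_floor_add_one x⟩) fun _ => G ⌊x⌋₊).symm
      _ ≤ _ := single_le_sum (f := fun m => step m x) (fun m _ => hstep0 m x)
        (mem_range.2 (Nat.lt_succ_of_le (Nat.floor_le_floor hxX)))
  rw [intervalIntegral.integral_of_le hX]
  calc ∫ x in Set.Ioc 0 X, f x ≤ ∫ x in Set.Ioc 0 X, ∑ m ∈ range (⌊X⌋₊ + 1), step m x := by
        refine MeasureTheory.integral_mono_of_nonneg (Filter.Eventually.of_forall hf)
          hinteg.integrableOn ?_
        filter_upwards [MeasureTheory.ae_restrict_mem measurableSet_Ioc] with x hx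
        exact hle x hx.1.le hx.2
    _ ≤ ∫ x, ∑ m ∈ range (⌊X⌋₊ + 1), step m x :=
        MeasureTheory.setIntegral_le_integral hinteg
          (Filter.Eventually.of_forall fun x => sum_nonneg fun m _ => hstep0 m x)
    _ = ∑ m ∈ range (⌊X⌋₊ + 1), G m := by
        rw [MeasureTheory.integral_finsetSum _ fun m _ => integrable_indicator_Ico m (G m)]
        exact sum_congr rfl fun m _ => integral_indicator_Ico m (G m)

end StepFunctions

section Moments

theorem one_add_log_pow_le {X : ℝ} (hX : 2 ≤ X) (n : ℕ) :
    (1 + Real.log X) ^ n ≤ 3 ^ n * Real.log X ^ n := by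
  have hlog : 1 / 2 ≤ Real.log X := by
    linarith [Real.log_two_gt_d9, Real.log_le_log two_pos hX]
  rw [← mul_pow]
  gcongr
  linarith

variable {J : Type*} [Fintype J] {a : J → ℤ} {g : ℕ → ℂ}

theorem integral_norm_sum_vonMangoldtTuple_pow_le (k : ℕ) (a : J → ℤ) (hg : ∀ n, ‖g n‖ ≤ 1)
    {H x : ℝ} (hH : 0 ≤ H) (hx : 0 ≤ x) :
    ∫ α in (0 : ℝ)..1, ‖∑ n ∈ Icc ⌈x⌉₊ ⌊x + H⌋₊,
        g n * eTwoPi (α * n) * (vonMangoldtTuple a n : ℂ)‖ ^ (2 * k)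
      ≤ ∑ u ∈ balancedTuples k (Icc (0 : ℤ) (⌊H⌋₊ + 1 : ℕ)) id,
          ∏ i, vonMangoldtTuple a (⌊x⌋₊ + u i) := by
  have hsub : Icc ⌈x⌉₊ ⌊x + H⌋₊ ⊆ Icc ⌊x⌋₊ (⌊x⌋₊ + (⌊H⌋₊ + 1)) := by
    refine Icc_subset_Icc (Nat.floor_le_ceil x) ?_
    rw [← Nat.lt_add_one_iff, Nat.floor_lt (by linarith)]
    push_cast
    linarith [Nat.lt_floor_add_one x, Nat.lt_floor_add_one H]
  calc _ = ∫ α in (0 : ℝ)..1, ‖∑ n ∈ Icc ⌈x⌉₊ ⌊x + H⌋₊,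
          g n * (vonMangoldtTuple a n : ℂ) * eTwoPi (α * (n : ℤ))‖ ^ (2 * k) := by
        simp only [Int.cast_natCast, mul_right_comm _ _ (eTwoPi _)]
    _ ≤ ∑ v ∈ balancedTuples k (Icc ⌈x⌉₊ ⌊x + H⌋₊) (fun n => (n : ℤ)),
          ∏ i, ‖g (v i) * (vonMangoldtTuple a (v i) : ℂ)‖ := integral_norm_sum_pow_le k _ _ _
    _ ≤ ∑ v ∈ balancedTuples k (Icc ⌈x⌉₊ ⌊x + H⌋₊) (fun n => (n : ℤ)),
          ∏ i, vonMangoldtTuple a (v i) := by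
        refine sum_le_sum fun v _ => prod_le_prod (fun i _ => norm_nonneg _) fun i _ => ?_
        rw [norm_mul, Complex.norm_real, Real.norm_of_nonneg (vonMangoldtTuple_nonneg a _)]
        exact mul_le_of_le_one_left (vonMangoldtTuple_nonneg a _) (hg _)
    _ ≤ ∑ v ∈ balancedTuples k (Icc ⌊x⌋₊ (⌊x⌋₊ + (⌊H⌋₊ + 1))) (fun n => (n : ℤ)),
          ∏ i, vonMangoldtTuple a (v i) :=
        sum_le_sum_of_subset_of_nonneg (balancedTuples_mono hsub k _)
          fun v _ _ => prod_nonneg fun i _ => vonMangoldtTuple_nonneg a _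
    _ = _ := sum_balancedTuples_Icc_add k _ _ _

theorem exists_integral_norm_sum_vonMangoldtTuple_pow_le [Nonempty J]
    (ha : Function.Injective a) {k : ℕ} (hk : 1 ≤ k) :
    ∃ K : ℝ, 0 < K ∧ ∀ X H : ℝ, ∀ g : ℕ → ℂ, 2 ≤ H → H ≤ X → (∀ n, ‖g n‖ ≤ 1) →
      ∫ x in (0 : ℝ)..X, ∫ α in (0 : ℝ)..1, ‖∑ n ∈ Icc ⌈x⌉₊ ⌊x + H⌋₊,
          g n * eTwoPi (α * n) * (vonMangoldtTuple a n : ℂ)‖ ^ (2 * k)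
        ≤ K * (X * momentMajorant k H (Real.log X ^ Fintype.card J)) := by
  have : Nonempty (Fin k ⊕ Fin k) := ⟨Sum.inl ⟨0, hk⟩⟩
  obtain ⟨C, hC, hbalanced⟩ := exists_sum_balanced_prod_vonMangoldtTuple_le (k := k) ha
    abs_momentSign (sum_momentSign k) (by simp [two_mul])
  set c : ℝ := 2 * 3 ^ Fintype.card J
  have hpow3 : (1 : ℝ) ≤ 3 ^ Fintype.card J := one_le_pow₀ (by norm_num)
  refine ⟨C * c ^ (2 * k), by positivity, fun X H g hH hHX hg => ?_⟩
  set h := ⌊H⌋₊ + 1 with hh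
  have hhH : (h : ℝ) + 1 ≤ 2 * H := by
    rw [hh]
    push_cast
    linarith [Nat.floor_le (by linarith : 0 ≤ H)]
  have hlog : 0 ≤ Real.log X := Real.log_nonneg (by linarith)
  have hM : (1 + Real.log X) ^ Fintype.card J ≤ c * Real.log X ^ Fintype.card J :=
    (one_add_log_pow_le (hH.trans hHX) _).trans (by gcongr; linarith)
  calc _ ≤ ∑ m ∈ range (⌊X⌋₊ + 1), ∑ u ∈ balancedTuples k (Icc (0 : ℤ) h) id,
          ∏ i, vonMangoldtTuple a (m + u i) :=
        integral_le_sum_floor (by linarith)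
          (fun x => intervalIntegral.integral_nonneg zero_le_one fun α _ => by positivity)
          (fun m => sum_nonneg fun u _ => prod_nonneg fun i _ => vonMangoldtTuple_nonneg a _)
          fun x hx => integral_norm_sum_vonMangoldtTuple_pow_le k a hg (by linarith) hx
    _ ≤ C * (X * momentMajorant k (h + 1) ((1 + Real.log X) ^ Fintype.card J)) := by
        rw [sum_comm]
        exact hbalanced X (hH.trans hHX) h (by linarith)
    _ ≤ C * (X * momentMajorant k (c * H) (c * Real.log X ^ Fintype.card J)) := by
        have := momentMajorant_mono (k := k) (by positivity : 0 ≤ (h : ℝ) + 1)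
          (by positivity : 0 ≤ (1 + Real.log X) ^ Fintype.card J)
          (hhH.trans (by gcongr; linarith : 2 * H ≤ c * H)) hM
        gcongr
        linarith
    _ ≤ C * (X * (c ^ (2 * k) * momentMajorant k H (Real.log X ^ Fintype.card J))) := by
        gcongr
        · linarith
        · exact momentMajorant_mul_le hk (by linarith) (by linarith)
    _ = _ := by ring

end Moments

/-- **Proposition 2.7 (moments of short exponential sums of prime correlations).**
For fixed `ℓ ≥ 1`, `k ≥ 2` and distinct integers `a₁, …, a_ℓ`, for `X ≥ H ≥ 2`
and any `g` with `|g(n)| ≤ 1`,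
`M_{2k} = ∫₀^X ∫₀^1 |∑_{x≤n≤x+H} g(n)e(αn)∏_j Λ(n+a_j)|^{2k} dα dx`
satisfies `M_{2k} ≪ X·(H^{2k−1} + H^k(log X)^{kℓ} + H(log X)^{(2k−1)ℓ})`;
in particular, if `H ≥ (log X)^{ℓk/(k−1)}` then `M_{2k} ≪ X·H^{2k−1}`. -/
theorem moment_bound_vonMangoldt_exponential_sums
    (ℓ k : ℕ) (hℓ : 1 ≤ ℓ) (hk : 2 ≤ k) (a : Fin ℓ → ℤ)
    (hdistinct : Function.Injective a) :
    ∃ K : ℝ, 0 < K ∧ ∀ X H : ℝ, ∀ g : ℕ → ℂ, 2 ≤ H → H ≤ X →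
      (∀ n, ‖g n‖ ≤ 1) →
      ((∫ x in (0 : ℝ)..X, ∫ α in (0 : ℝ)..(1 : ℝ),
          ‖∑ n ∈ Icc ⌈x⌉₊ ⌊x + H⌋₊,
            g n * eTwoPi (α * n) *
              ((∏ j, Λ (((n : ℤ) + a j).toNat) : ℝ) : ℂ)‖ ^ (2 * k))
        ≤ K * (X * (H ^ (2 * k - 1) + H ^ k * Real.log X ^ (k * ℓ)
            + H * Real.log X ^ ((2 * k - 1) * ℓ)))) ∧
      (Real.log X ^ (((ℓ : ℝ) * k) / ((k : ℝ) - 1)) ≤ H →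
        (∫ x in (0 : ℝ)..X, ∫ α in (0 : ℝ)..(1 : ℝ),
          ‖∑ n ∈ Icc ⌈x⌉₊ ⌊x + H⌋₊,
            g n * eTwoPi (α * n) *
              ((∏ j, Λ (((n : ℤ) + a j).toNat) : ℝ) : ℂ)‖ ^ (2 * k))
        ≤ K * (X * H ^ (2 * k - 1))) := by
  have : Nonempty (Fin ℓ) := ⟨⟨0, hℓ⟩⟩
  obtain ⟨K, hK, hmoment⟩ :=
    exists_integral_norm_sum_vonMangoldtTuple_pow_le hdistinct (by lia : 1 ≤ k)
  rw [Fintype.card_fin] at hmoment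
  refine ⟨3 * K, by positivity, fun X H g hH hHX hg => ?_⟩
  have hlog : 0 ≤ Real.log X := Real.log_nonneg (by linarith)
  refine ⟨(hmoment X H g hH hHX hg).trans ?_, fun hlogH => (hmoment X H g hH hHX hg).trans ?_⟩
  · have hmajorant : 0 ≤ X * momentMajorant k H (Real.log X ^ ℓ) :=
      mul_nonneg (by linarith) (momentMajorant_nonneg (by linarith) (by positivity))
    calc K * (X * momentMajorant k H (Real.log X ^ ℓ))
        ≤ 3 * K * (X * momentMajorant k H (Real.log X ^ ℓ)) := by gcongr; linarith
      _ = _ := by simp only [momentMajorant, ← pow_mul, mul_comm ℓ]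
  · calc K * (X * momentMajorant k H (Real.log X ^ ℓ)) ≤ K * (X * (3 * H ^ (2 * k - 1))) := by
          gcongr
          · linarith
          · exact momentMajorant_le_of_pow_le (by lia) (by linarith) (by positivity)
              (pow_pow_le_of_rpow_le hk hlog hlogH)
      _ = 3 * K * (X * H ^ (2 * k - 1)) := by ring
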